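/- Let D and G be Jordan domains in ℂ, let A ⊂ ∂D and B ⊂ ∂G be nonempty open subsets of the boundaries, and let W := ((D ∪ A) × B) ∪ (A × (G ∪ B)). Then for every continuous function f : W → ℂ such that f(a,·) is holomorphic on G for each a ∈ A and f(·,b) is holomorphic on D for each b ∈ B, there exists a unique function f̂, continuous on Ŵ ∪ W and holomorphic on Ŵ, with f̂ = f on W, where Ŵ := { (z,w) ∈ D × G : ω(z,A,D) + ω(w,B,G) < 1 } and ω denotes harmonic measure. -/

import Mathlib

open Complex Metric Filter Set MeasureTheory
open scoped Topology Real Manifold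

noncomputable section

/-- Plurisubharmonic (subharmonic when `V = ℂ`) real-valued function on a set
in a complex normed space: upper semicontinuous plus the sub-mean value
inequality over small circles in every complex direction. -/
def PSHOn {V : Type*} [NormedAddCommGroup V] [NormedSpace ℂ V]
    (u : V → ℝ) (D : Set V) : Prop :=
  UpperSemicontinuousOn u D ∧
  ∀ z ∈ D, ∀ v : V, ∀ᶠ r in 𝓝[>] (0:ℝ),
    u z ≤ (1 / (2 * Real.pi)) *
      ∫ θ in (0:ℝ)..(2 * Real.pi), u (z + (Complex.ofReal r * Complex.exp (θ * Complex.I)) • v)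

/-- The (unregularized) extremal function `h_{A,D}` relative to the canonical
system of approach regions. -/
def hFun {V : Type*} [NormedAddCommGroup V] [NormedSpace ℂ V]
    (A D : Set V) : V → ℝ := fun z =>
  sSup ((fun u : V → ℝ => u z) ''
    {u | PSHOn u D ∧ (∀ x ∈ D, u x ≤ 1) ∧ ∀ a ∈ A, Filter.limsup u (𝓝[D] a) ≤ 0})

/-- The relative extremal function `ω(·, A, D)` (canonical approach regions):
the upper semicontinuous regularization of `h_{A,D}`. -/
def omegaC {V : Type*} [NormedAddCommGroup V] [NormedSpace ℂ V]
    (A D : Set V) (z : V) : ℝ :=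
  Filter.limsup (hFun A D) (𝓝[D] z)

/-- A Jordan domain in `ℂ`: a bounded domain whose boundary is a Jordan curve
(homeomorphic to the unit circle). -/
def IsJordanDomain (D : Set ℂ) : Prop :=
  IsOpen D ∧ IsConnected D ∧ Bornology.IsBounded D ∧
    Nonempty (↥(sphere (0:ℂ) 1) ≃ₜ ↥(frontier D))

open Real (circleAverage) in
/-- A subharmonic function with values in `[0, 1]`: upper semicontinuous, with the sub-mean value
property on small circles. -/
structure IsUnitSubharmonic (u : ℂ → ℝ) (V : Set ℂ) : Prop where
  usc : UpperSemicontinuousOn u V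
  nonneg : ∀ z ∈ V, 0 ≤ u z
  le_one : ∀ z ∈ V, u z ≤ 1
  mean : ∀ z ∈ V, ∀ᶠ r in 𝓝[>] (0 : ℝ), u z ≤ circleAverage u z r

theorem IsOpen.eventually_closedBall_subset {V : Set ℂ} (hV : IsOpen V) {z : ℂ} (hz : z ∈ V) :
    ∀ᶠ r in 𝓝[>] (0 : ℝ), closedBall z r ⊆ V :=
  (_root_.eventually_closedBall_subset (hV.mem_nhds hz)).filter_mono nhdsWithin_le_nhds

theorem UpperSemicontinuousOn.measurable_comp_circleMap {u : ℂ → ℝ} {V : Set ℂ} {z : ℂ} {r : ℝ}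
    (hu : UpperSemicontinuousOn u V) (hs : sphere z |r| ⊆ V) :
    Measurable fun θ => u (circleMap z r θ) := by
  refine UpperSemicontinuous.measurable fun θ c hc => ?_
  have h := hu _ (hs (circleMap_mem_sphere' z r θ)) c hc
  refine (tendsto_nhdsWithin_iff.2 ⟨(continuous_circleMap z r).tendsto θ, ?_⟩).eventually h
  exact Eventually.of_forall fun θ => hs (circleMap_mem_sphere' z r θ)

theorem UpperSemicontinuousOn.circleIntegrable_of_bounds {u : ℂ → ℝ} {V : Set ℂ} {z : ℂ} {r : ℝ}
    (hu : UpperSemicontinuousOn u V) (h0 : ∀ z ∈ V, 0 ≤ u z) (h1 : ∀ z ∈ V, u z ≤ 1)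
    (hs : sphere z |r| ⊆ V) : CircleIntegrable u z r := by
  refine (intervalIntegrable_iff).2 (Measure.integrableOn_of_bounded (M := 1) ?_
    (hu.measurable_comp_circleMap hs).aestronglyMeasurable ?_)
  · simpa using ENNReal.mul_ne_top (by simp) (by simp)
  · refine Eventually.of_forall fun θ => ?_
    have hθ := hs (circleMap_mem_sphere' z r θ)
    rw [Real.norm_of_nonneg (h0 _ hθ)]
    exact h1 _ hθ

namespace IsUnitSubharmonic
variable {u : ℂ → ℝ} {V : Set ℂ}

theorem mono (hu : IsUnitSubharmonic u V) {W : Set ℂ} (h : W ⊆ V) : IsUnitSubharmonic u W :=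
  ⟨hu.usc.mono h, fun z hz => hu.nonneg z (h hz), fun z hz => hu.le_one z (h hz),
    fun z hz => hu.mean z (h hz)⟩

theorem circleIntegrable (hu : IsUnitSubharmonic u V) {z : ℂ} {r : ℝ}
    (hs : sphere z |r| ⊆ V) : CircleIntegrable u z r :=
  hu.usc.circleIntegrable_of_bounds hu.nonneg hu.le_one hs

end IsUnitSubharmonic

theorem circleAverage_re_mul_sub (a x : ℂ) (r : ℝ) :
    Real.circleAverage (fun z => (a * (z - x)).re) x r = 0 := by
  have h1 : DiffContOnCl ℂ (fun z => a * (z - x)) (ball x |r|) :=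
    (by fun_prop : Differentiable ℂ fun z => a * (z - x)).diffContOnCl
  have h2 := h1.circleAverage
  have h3 := Complex.reCLM.circleAverage_comp_comm (f := fun z => a * (z - x)) (c := x) (R := r)
    ((by fun_prop : Continuous fun z => a * (z - x)).continuousOn.circleIntegrable')
  have h4 : (Complex.reCLM ∘ fun z => a * (z - x)) = fun z => (a * (z - x)).re := rfl
  rw [h4, h2] at h3
  simpa using h3

/-- The maximum principle for the difference of a subharmonic and a continuous superharmonic
function. -/
theorem IsUnitSubharmonic.le_of_boundary {V : Set ℂ} (hV : IsOpen V) (hb : Bornology.IsBounded V)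
    {u h : ℂ → ℝ} (hu : IsUnitSubharmonic u V) (hh : ContinuousOn h V)
    (hm : ∀ z ∈ V, ∀ᶠ r in 𝓝[>] (0 : ℝ), Real.circleAverage h z r ≤ h z)
    (hbd : ∀ x ∈ frontier V, ∀ ε > 0, ∀ᶠ z in 𝓝[V] x, u z - h z ≤ ε) :
    ∀ z ∈ V, u z ≤ h z := by
  by_contra! hcon
  obtain ⟨z₀, hz₀, hlt⟩ := hcon
  obtain ⟨R, hR0, hR⟩ := hb.subset_ball_lt 0 0
  set s := u z₀ - h z₀ with hs
  have hs0 : 0 < s := by linarith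
  set η := s / (4 * R ^ 2) with hη
  have hη0 : 0 < η := by positivity
  have hηR : η * R ^ 2 = s / 4 := by rw [hη]; field_simp
  have hnorm : ∀ z ∈ V, η * ‖z‖ ^ 2 ≤ s / 4 := by
    intro z hz
    have := mem_ball_zero_iff.1 (hR hz)
    rw [← hηR]
    gcongr
  set w : ℂ → ℝ := fun z => u z - h z + η * ‖z‖ ^ 2 with hw
  have husc : UpperSemicontinuousOn w V := by
    have h2 : UpperSemicontinuousOn (fun z => - h z + η * ‖z‖ ^ 2) V :=
      ContinuousOn.upperSemicontinuousOn (by fun_prop)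
    have h3 := hu.usc.add h2
    have : w = fun z => u z + (- h z + η * ‖z‖ ^ 2) := by
      funext z; simp only [hw]; ring
    rwa [this]
  set S := {z ∈ V | s ≤ w z} with hS
  have hz₀S : z₀ ∈ S := ⟨hz₀, by simp only [hw]; have : 0 ≤ η * ‖z₀‖ ^ 2 := by positivity
                                 linarith⟩
  have hSc : IsCompact S := by
    refine Metric.isCompact_of_isClosed_isBounded ?_ (hb.subset fun z hz => hz.1)
    refine isClosed_of_closure_subset fun x hx => ?_
    have hfr : ∃ᶠ z in 𝓝[V] x, s ≤ w z := by
      rw [frequently_nhdsWithin_iff]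
      refine (mem_closure_iff_frequently.1 hx).mono fun z hz => ⟨hz.2, hz.1⟩
    by_cases hxV : x ∈ V
    · refine ⟨hxV, ?_⟩
      by_contra! hlt'
      exact hfr ((husc x hxV s hlt').mono fun z hz => not_le.2 hz)
    · exfalso
      have hxf : x ∈ frontier V := by
        rw [hV.frontier_eq]
        exact ⟨closure_mono (fun z hz => hz.1) hx, hxV⟩
      refine hfr ?_
      filter_upwards [hbd x hxf (s / 4) (by positivity), self_mem_nhdsWithin] with z hz hzV
      have := hnorm z hzV
      simp only [hw]
      linarith
  obtain ⟨x, hxS, hmax⟩ := (husc.mono fun z hz => hz.1).exists_isMaxOn ⟨z₀, hz₀S⟩ hSc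
  have hmaxV : ∀ z ∈ V, w z ≤ w x := by
    intro z hz
    by_cases h : s ≤ w z
    · exact hmax ⟨hz, h⟩
    · exact (not_le.1 h).le.trans hxS.2
  obtain ⟨r, hr1, hr2, hr3, hr4⟩ := ((hu.mean x hxS.1).and ((hm x hxS.1).and
    ((hV.eventually_closedBall_subset hxS.1).and self_mem_nhdsWithin))).exists
  have hsub : sphere x |r| ⊆ V := by
    rw [abs_of_pos hr4]; exact sphere_subset_closedBall.trans hr3
  set k : ℂ → ℝ := fun z => h z + ((u x - h x - η * r ^ 2) -
    (2 * η) * (starRingEnd ℂ x * (z - x)).re) with hk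
  have hle : ∀ z ∈ sphere x |r|, u z ≤ k z := by
    intro z hz
    have h1 := hmaxV z (hsub hz)
    have h2 : ‖z‖ ^ 2 = ‖x‖ ^ 2 + 2 * (starRingEnd ℂ x * (z - x)).re + r ^ 2 := by
      have h3 : ‖z - x‖ ^ 2 = r ^ 2 := by
        rw [mem_sphere_iff_norm.1 hz, sq_abs]
      rw [← h3, ← Complex.normSq_eq_norm_sq, ← Complex.normSq_eq_norm_sq,
        ← Complex.normSq_eq_norm_sq]
      simp only [Complex.normSq_apply, Complex.mul_re, Complex.conj_re, Complex.conj_im,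
        Complex.sub_re, Complex.sub_im]
      ring
    simp only [hw, hk] at h1 ⊢
    rw [h2] at h1
    linarith
  have hhi : CircleIntegrable h x r := (hh.mono hsub).circleIntegrable'
  have hki2 : CircleIntegrable (fun z => (u x - h x - η * r ^ 2) -
      (2 * η) * (starRingEnd ℂ x * (z - x)).re) x r :=
    (by fun_prop : Continuous _).continuousOn.circleIntegrable'
  have hki3 : CircleIntegrable (fun z => (2 * η) * (starRingEnd ℂ x * (z - x)).re) x r :=
    (by fun_prop : Continuous _).continuousOn.circleIntegrable'
  have hki : CircleIntegrable k x r := hhi.add hki2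
  have havg := Real.circleAverage_mono (hu.circleIntegrable hsub) hki hle
  have hkavg : Real.circleAverage k x r = Real.circleAverage h x r + (u x - h x - η * r ^ 2) := by
    simp only [hk]
    rw [Real.circleAverage_fun_add hhi hki2, Real.circleAverage_fun_sub (circleIntegrable_const _ _ _) hki3,
      Real.circleAverage_const]
    have := Real.circleAverage_fun_smul (a := 2 * η)
      (f := fun z => (starRingEnd ℂ x * (z - x)).re) (c := x) (R := r)
    simp only [smul_eq_mul] at this
    rw [this, circleAverage_re_mul_sub]
    simp
  have : 0 < η * r ^ 2 := by positivity
  linarith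

/-- An upper semicontinuous function on a compact set is a decreasing limit of Lipschitz
functions. -/
theorem UpperSemicontinuousOn.exists_lipschitz_approx {K : Set ℂ} {u : ℂ → ℝ}
    (hu : UpperSemicontinuousOn u K) (h0 : ∀ z ∈ K, 0 ≤ u z) (h1 : ∀ z ∈ K, u z ≤ 1) :
    ∃ φ : ℕ → ℂ → ℝ, (∀ n x y, φ n x ≤ φ n y + n * dist x y) ∧
      (∀ n, ∀ x ∈ K, u x ≤ φ n x) ∧ (∀ n, ∀ x ∈ K, φ n x ≤ 1) ∧
      ∀ x ∈ K, Tendsto (fun n => φ n x) atTop (𝓝 (u x)) := by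
  rcases K.eq_empty_or_nonempty with rfl | hne
  · exact ⟨fun _ _ => 0, by simp; intros; positivity, by simp, by simp, by simp⟩
  have : Nonempty K := hne.to_subtype
  have hbdd : ∀ (n : ℕ) (x : ℂ), BddAbove (range fun y : K => u y - n * dist x y) := by
    intro n x
    refine ⟨1, ?_⟩
    rintro _ ⟨y, rfl⟩
    have : 0 ≤ n * dist x y := by positivity
    have := h1 y y.2
    simp only
    linarith
  have hle : ∀ n : ℕ, ∀ x ∈ K, u x ≤ ⨆ y : K, (u y - n * dist x y) := by
    intro n x hx
    have := le_ciSup (hbdd n x) ⟨x, hx⟩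
    simpa using this
  refine ⟨fun n x => ⨆ y : K, (u y - n * dist x y), ?_, hle, ?_, ?_⟩
  · intro n x x'
    refine ciSup_le fun y => ?_
    have h2 := le_ciSup (hbdd n x') y
    have h3 : dist x' y ≤ dist x x' + dist x y := by
      rw [dist_comm x x']; exact dist_triangle _ _ _
    have h4 : (n : ℝ) * dist x' y ≤ n * (dist x x' + dist x y) := by gcongr
    simp only at h2 ⊢
    linarith
  · intro n x hx
    refine ciSup_le fun y => ?_
    have : 0 ≤ n * dist x y := by positivity
    have := h1 y y.2
    linarith
  · intro x hx
    refine Metric.tendsto_atTop.2 fun ε hε => ?_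
    have hev := hu x hx (u x + ε / 2) (by linarith)
    obtain ⟨δ, hδ, hδ'⟩ := Metric.mem_nhdsWithin_iff.1 hev
    obtain ⟨N, hN⟩ := exists_nat_gt (1 / δ)
    refine ⟨N, fun n hn => ?_⟩
    have hnδ : 1 ≤ n * δ := by
      have : (N : ℝ) ≤ n := by exact_mod_cast hn
      rw [div_lt_iff₀ hδ] at hN
      nlinarith
    have hup : ⨆ y : K, (u y - n * dist x y) ≤ u x + ε / 2 := by
      refine ciSup_le fun y => ?_
      by_cases hy : dist x y < δ
      · have := hδ' ⟨by rwa [mem_ball, dist_comm], y.2⟩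
        have h5 : (0 : ℝ) ≤ n * dist x y := by positivity
        simp only [Set.mem_ofPred_eq] at this
        linarith
      · have h6 : (n : ℝ) * δ ≤ n * dist x y := by gcongr; exact not_lt.1 hy
        have := h1 y y.2
        have := h0 x hx
        linarith
    have := hle n x hx
    rw [Real.dist_eq, abs_lt]
    constructor <;> linarith

theorem continuous_of_le_add_dist {φ : ℂ → ℝ} {n : ℕ} (h : ∀ x y, φ x ≤ φ y + n * dist x y) :
    Continuous φ := by
  refine (LipschitzWith.of_le_add_mul n ?_).continuous
  simpa using h

/-- Trigonometric polynomials are dense: a continuous real function on a circle is uniformly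
approximated by real parts of entire functions. -/
theorem exists_entire_re_approx {φ : ℂ → ℝ} (hφ : Continuous φ) (c : ℂ) {R : ℝ} (hR : 0 < R)
    {ε : ℝ} (hε : 0 < ε) :
    ∃ F : ℂ → ℂ, Differentiable ℂ F ∧ ∀ z ∈ sphere c R, |(F z).re - φ z| < ε := by
  have : Fact (0 < 2 * π) := ⟨Real.two_pi_pos⟩
  have hper : Function.Periodic (fun θ : ℝ => (φ (circleMap c R θ) : ℂ)) (2 * π) := by
    intro θ
    simp only [periodic_circleMap c R θ]
  have hcont : Continuous (hper.lift) := by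
    refine continuous_coinduced_dom.2 ?_
    exact Complex.continuous_ofReal.comp (hφ.comp (continuous_circleMap c R))
  set g : C(AddCircle (2 * π), ℂ) := ⟨hper.lift, hcont⟩ with hg
  have hmem : g ∈ (Submodule.span ℂ (range (fourier (T := 2 * π)))).topologicalClosure := by
    rw [span_fourier_closure_eq_top]; trivial
  obtain ⟨p, hp, hpg⟩ := Metric.mem_closure_iff.1 hmem ε hε
  have hrep : ∃ F₁ F₂ : ℂ → ℂ, Differentiable ℂ F₁ ∧ Differentiable ℂ F₂ ∧ ∀ θ : ℝ,
      p (θ : AddCircle (2 * π)) = F₁ (circleMap c R θ) + starRingEnd ℂ (F₂ (circleMap c R θ)) := by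
    refine Submodule.span_induction (p := fun p _ => ∃ F₁ F₂ : ℂ → ℂ, Differentiable ℂ F₁ ∧
      Differentiable ℂ F₂ ∧ ∀ θ : ℝ, p (θ : AddCircle (2 * π)) =
        F₁ (circleMap c R θ) + starRingEnd ℂ (F₂ (circleMap c R θ))) ?_ ?_ ?_ ?_ hp
    · rintro _ ⟨n, rfl⟩
      have hexp : ∀ θ : ℝ, (circleMap c R θ - c) / R = exp (θ * I) := by
        intro θ
        have : (R : ℂ) ≠ 0 := by exact_mod_cast hR.ne'
        simp only [circleMap, add_sub_cancel_left]
        field_simp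
      have hpi : (π : ℂ) ≠ 0 := by exact_mod_cast Real.pi_ne_zero
      obtain ⟨m, rfl | rfl⟩ := n.eq_nat_or_neg
      · refine ⟨fun z => ((z - c) / R) ^ m, 0, by fun_prop, differentiable_const _, fun θ => ?_⟩
        rw [fourier_coe_apply]
        simp only []
        rw [hexp, ← Complex.exp_nat_mul]
        simp only [Pi.zero_apply, map_zero, add_zero]
        congr 1
        push_cast
        field_simp
      · refine ⟨0, fun z => ((z - c) / R) ^ m, differentiable_const _, by fun_prop, fun θ => ?_⟩
        rw [fourier_coe_apply]
        simp only []
        rw [hexp, ← Complex.exp_nat_mul, ← Complex.exp_conj]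
        simp only [Pi.zero_apply, zero_add]
        congr 1
        simp only [map_mul, Complex.conj_ofReal, Complex.conj_I, map_natCast]
        push_cast
        field_simp
    · exact ⟨0, 0, differentiable_const _, differentiable_const _, by simp⟩
    · rintro p q - - ⟨F₁, F₂, h1, h2, h3⟩ ⟨G₁, G₂, k1, k2, k3⟩
      refine ⟨F₁ + G₁, F₂ + G₂, h1.add k1, h2.add k2, fun θ => ?_⟩
      simp only [ContinuousMap.add_apply, Pi.add_apply, map_add, h3, k3]
      ring
    · rintro a p - ⟨F₁, F₂, h1, h2, h3⟩
      refine ⟨fun z => a * F₁ z, fun z => starRingEnd ℂ a * F₂ z, h1.const_mul _, h2.const_mul _,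
        fun θ => ?_⟩
      simp only [ContinuousMap.smul_apply, smul_eq_mul, map_mul, h3, Complex.conj_conj]
      ring
  obtain ⟨F₁, F₂, h1, h2, h3⟩ := hrep
  refine ⟨F₁ + F₂, h1.add h2, fun z hz => ?_⟩
  rw [← abs_of_pos hR, ← range_circleMap] at hz
  obtain ⟨θ, rfl⟩ := hz
  have h4 := (ContinuousMap.dist_apply_le_dist (f := g) (g := p) (θ : AddCircle (2 * π))).trans_lt hpg
  have h5 : g (θ : AddCircle (2 * π)) = (φ (circleMap c R θ) : ℂ) := rfl
  rw [dist_comm, Complex.dist_eq, h5] at h4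
  refine lt_of_le_of_lt ?_ h4
  refine le_trans (le_of_eq ?_) (Complex.abs_re_le_norm _)
  rw [h3]
  simp

theorem tendsto_circleAverage {φ : ℕ → ℂ → ℝ} {u : ℂ → ℝ} {c : ℂ} {R : ℝ}
    (hm : ∀ n, Measurable fun θ => φ n (circleMap c R θ))
    (hb : ∀ n, ∀ z ∈ sphere c |R|, |φ n z| ≤ 1)
    (ht : ∀ z ∈ sphere c |R|, Tendsto (fun n => φ n z) atTop (𝓝 (u z))) :
    Tendsto (fun n => Real.circleAverage (φ n) c R) atTop (𝓝 (Real.circleAverage u c R)) := by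
  simp only [Real.circleAverage_def]
  refine Tendsto.const_smul ?_ _
  refine intervalIntegral.tendsto_integral_filter_of_dominated_convergence (fun _ => 1) ?_ ?_ ?_ ?_
  · exact Eventually.of_forall fun n => (hm n).aestronglyMeasurable
  · exact Eventually.of_forall fun n => Eventually.of_forall fun θ _ =>
      hb n _ (circleMap_mem_sphere' c R θ)
  · exact intervalIntegrable_const
  · exact Eventually.of_forall fun θ _ => ht _ (circleMap_mem_sphere' c R θ)

/-- Subharmonicity is a local property: the sub-mean value inequality holds on all discs. -/
theorem IsUnitSubharmonic.le_circleAverage {V : Set ℂ} {u : ℂ → ℝ} (hu : IsUnitSubharmonic u V)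
    {c : ℂ} {R : ℝ} (hR : 0 < R) (hV : closedBall c R ⊆ V) : u c ≤ Real.circleAverage u c R := by
  have habs : |R| = R := abs_of_pos hR
  have hsph : sphere c |R| ⊆ V := by rw [habs]; exact sphere_subset_closedBall.trans hV
  have key : ∀ F : ℂ → ℂ, Differentiable ℂ F → (∀ z ∈ sphere c R, u z ≤ (F z).re) →
      u c ≤ Real.circleAverage (fun z => (F z).re) c R := by
    intro F hF hle
    have hcirc : ∀ x r, Real.circleAverage (fun z => (F z).re) x r = (F x).re := by
      intro x r
      have h3 := Complex.reCLM.circleAverage_comp_comm (f := F) (c := x) (R := r)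
        (hF.continuous.continuousOn.circleIntegrable')
      rw [hF.diffContOnCl.circleAverage] at h3
      exact h3
    rw [hcirc]
    have hFc := hF.continuous
    refine (hu.mono (ball_subset_closedBall.trans hV)).le_of_boundary (h := fun z => (F z).re)
      isOpen_ball isBounded_ball (by fun_prop)
      (fun z _ => Eventually.of_forall fun r => (hcirc z r).le) ?_ c (mem_ball_self hR)
    intro x hx ε hε
    rw [frontier_ball _ hR.ne'] at hx
    have h1 := (hu.usc x (hV (sphere_subset_closedBall hx)) (u x + ε / 2) (by linarith)).filter_mono
      (nhdsWithin_mono x (ball_subset_closedBall.trans hV))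
    have h2 : ∀ᶠ z in 𝓝[ball c R] x, (F x).re - ε / 2 < (F z).re :=
      ((Complex.continuous_re.comp hFc).tendsto x).eventually_const_lt
        (by simp only [Function.comp_apply]; linarith) |>.filter_mono nhdsWithin_le_nhds
    filter_upwards [h1, h2] with z hz1 hz2
    have := hle x hx
    linarith
  obtain ⟨φ, hφl, hφu, hφ1, hφt⟩ := (hu.usc.mono hsph).exists_lipschitz_approx
    (fun z hz => hu.nonneg z (hsph hz)) (fun z hz => hu.le_one z (hsph hz))
  have hφc : ∀ n, Continuous (φ n) := fun n => continuous_of_le_add_dist (hφl n)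
  have hn : ∀ n, u c ≤ Real.circleAverage (φ n) c R := by
    intro n
    refine le_of_forall_pos_le_add fun ε hε => ?_
    obtain ⟨F, hF, hFφ⟩ := exists_entire_re_approx (hφc n) c hR (half_pos hε)
    have h1 := key (fun z => F z + (ε / 2 : ℝ)) (by fun_prop) (fun z hz => by
      have h2 := hφu n z (by rwa [habs])
      have h3 := (abs_lt.1 (hFφ z hz)).1
      simp only [Complex.add_re, Complex.ofReal_re]
      linarith)
    refine h1.trans ?_
    have h4 : Real.circleAverage (fun z => φ n z + ε) c R = Real.circleAverage (φ n) c R + ε := by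
      rw [Real.circleAverage_fun_add ((hφc n).continuousOn.circleIntegrable')
        (circleIntegrable_const _ _ _), Real.circleAverage_const]
    rw [← h4]
    have hFc := hF.continuous
    refine Real.circleAverage_mono (ContinuousOn.circleIntegrable' (by fun_prop))
      (ContinuousOn.circleIntegrable' (((hφc n).add continuous_const).continuousOn)) ?_
    intro z hz
    have h3 := (abs_lt.1 (hFφ z (by rwa [← habs]))).2
    simp only [Complex.add_re, Complex.ofReal_re]
    linarith
  have hlim := tendsto_circleAverage (φ := φ) (u := u) (c := c) (R := R)
    (fun n => ((hφc n).comp (continuous_circleMap c R)).measurable)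
    (fun n z hz => by
      rw [abs_of_nonneg ((hu.nonneg _ (hsph hz)).trans (hφu n _ hz))]
      exact hφ1 n _ hz) hφt
  exact ge_of_tendsto' hlim hn

theorem circleAverage_eq_one_div_mul_integral (u : ℂ → ℝ) (z v : ℂ) (r : ℝ) :
    (1 / (2 * Real.pi)) * ∫ θ in (0:ℝ)..(2 * Real.pi),
      u (z + (Complex.ofReal r * Complex.exp (θ * Complex.I)) • v) =
    Real.circleAverage u z (r * ‖v‖) := by
  rw [Real.circleAverage_eq_integral_add (η := Complex.arg v), smul_eq_mul, one_div]
  congr 1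
  refine intervalIntegral.integral_congr fun θ _ => ?_
  simp only [circleMap, smul_eq_mul]
  congr 2
  nth_rewrite 1 [← Complex.norm_mul_exp_arg_mul_I v]
  push_cast
  rw [add_mul, Complex.exp_add]
  ring

theorem PSHOn.isUnitSubharmonic_max {u : ℂ → ℝ} {D : Set ℂ} (hu : PSHOn u D) (hD : IsOpen D)
    (h1 : ∀ x ∈ D, u x ≤ 1) : IsUnitSubharmonic (fun z => max (u z) 0) D := by
  have husc : UpperSemicontinuousOn (fun z => max (u z) 0) D := 
    hu.1.sup (continuousOn_const.upperSemicontinuousOn)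
  have h0' : ∀ x ∈ D, 0 ≤ max (u x) 0 := fun x _ => le_max_right _ _
  have h1' : ∀ x ∈ D, max (u x) 0 ≤ 1 := fun x hx => max_le (h1 x hx) zero_le_one
  refine ⟨husc, h0', h1', fun z hz => ?_⟩
  filter_upwards [hu.2 z hz 1, hD.eventually_closedBall_subset hz, self_mem_nhdsWithin]
    with r hr hrs hr0
  rw [circleAverage_eq_one_div_mul_integral, norm_one, mul_one] at hr
  have hr0 : 0 < r := hr0
  have hs : sphere z |r| ⊆ D := by
    rw [abs_of_pos hr0]; exact sphere_subset_closedBall.trans hrs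
  have hi := husc.circleIntegrable_of_bounds h0' h1' hs
  have hnn : 0 ≤ Real.circleAverage (fun z => max (u z) 0) z r :=
    Real.circleAverage_nonneg_of_nonneg fun x hx => h0' x (hs hx)
  refine max_le (hr.trans ?_) hnn
  by_cases hint : CircleIntegrable u z r
  · exact Real.circleAverage_mono hint hi fun x _ => le_max_left _ _
  · rwa [Real.circleAverage.integral_undef hint]

theorem IsUnitSubharmonic.pshOn {u : ℂ → ℝ} {D : Set ℂ} (hu : IsUnitSubharmonic u D) :
    PSHOn u D := by
  refine ⟨hu.usc, fun z hz v => ?_⟩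
  simp only [circleAverage_eq_one_div_mul_integral]
  rcases eq_or_ne v 0 with rfl | hv
  · simp
  · have hv' : 0 < ‖v‖ := norm_pos_iff.2 hv
    have : Tendsto (fun r : ℝ => r * ‖v‖) (𝓝[>] 0) (𝓝[>] 0) := by
      refine tendsto_nhdsWithin_iff.2 ⟨?_, ?_⟩
      · have : Tendsto (fun r : ℝ => r * ‖v‖) (𝓝 0) (𝓝 (0 * ‖v‖)) :=
          tendsto_id.mul_const _
        rw [zero_mul] at this
        exact this.mono_left nhdsWithin_le_nhds
      · filter_upwards [self_mem_nhdsWithin] with r hr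
        exact mul_pos hr hv'
    exact this.eventually (hu.mean z hz)

/-- `u` tends to zero, or below zero, at every point of `A` from within `D`. -/
def VanishesAt (u : ℂ → ℝ) (D A : Set ℂ) : Prop :=
  ∀ a ∈ A, ∀ ε > 0, ∀ᶠ z in 𝓝[D] a, u z ≤ ε

section omega
variable {D A : Set ℂ}

theorem hFun_bddAbove {z : ℂ} (hz : z ∈ D) : BddAbove ((fun u : ℂ → ℝ => u z) ''
    {u | PSHOn u D ∧ (∀ x ∈ D, u x ≤ 1) ∧ ∀ a ∈ A, Filter.limsup u (𝓝[D] a) ≤ 0}) := by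
  refine ⟨1, ?_⟩
  rintro _ ⟨u, hu, rfl⟩
  exact hu.2.1 z hz

theorem IsUnitSubharmonic.le_hFun (hA : A ⊆ closure D) {v : ℂ → ℝ} (hv : IsUnitSubharmonic v D)
    (hvA : VanishesAt v D A) {z : ℂ} (hz : z ∈ D) : v z ≤ hFun A D z := by
  refine le_csSup (hFun_bddAbove hz) ⟨v, ⟨hv.pshOn, hv.le_one, fun a ha => ?_⟩, rfl⟩
  have : (𝓝[D] a).NeBot := mem_closure_iff_nhdsWithin_neBot.1 (hA ha)
  refine le_of_forall_pos_le_add fun ε hε => ?_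
  rw [zero_add]
  refine limsup_le_of_le ?_ (hvA a ha ε hε)
  refine IsCoboundedUnder.of_frequently_ge (a := 0) (Eventually.frequently ?_)
  filter_upwards [self_mem_nhdsWithin] with x hx using hv.nonneg x hx

theorem isUnitSubharmonic_zero (V : Set ℂ) : IsUnitSubharmonic (fun _ => 0) V :=
  ⟨continuousOn_const.upperSemicontinuousOn, fun _ _ => le_rfl, fun _ _ => zero_le_one,
    fun z _ => Eventually.of_forall fun r => by rw [Real.circleAverage_const]⟩

theorem hFun_nonneg (hA : A ⊆ closure D) {z : ℂ} (hz : z ∈ D) : 0 ≤ hFun A D z :=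
  (isUnitSubharmonic_zero D).le_hFun hA
    (fun _ _ _ hε => Eventually.of_forall fun _ => hε.le) hz

theorem hFun_le_of_forall (hD : IsOpen D) {z : ℂ} {c : ℝ}
    (h : ∀ v, IsUnitSubharmonic v D → VanishesAt v D A → v z ≤ c) : hFun A D z ≤ c := by
  have hc : 0 ≤ c := h _ (isUnitSubharmonic_zero D)
    (fun _ _ _ hε => Eventually.of_forall fun _ => hε.le)
  refine Real.sSup_le ?_ hc
  rintro _ ⟨u, hu, rfl⟩
  refine (le_max_left (u z) 0).trans
    (h _ (hu.1.isUnitSubharmonic_max hD hu.2.1) fun a ha ε hε => ?_)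
  have hbd : IsBoundedUnder (· ≤ ·) (𝓝[D] a) u :=
    ⟨1, by
      rw [eventually_map]
      filter_upwards [self_mem_nhdsWithin] with x hx using hu.2.1 x hx⟩
  filter_upwards [eventually_lt_of_limsup_lt ((hu.2.2 a ha).trans_lt hε) hbd] with x hx
  exact max_le hx.le hε.le

theorem hFun_le_one (hD : IsOpen D) {z : ℂ} (hz : z ∈ D) : hFun A D z ≤ 1 :=
  hFun_le_of_forall hD fun _ hv _ => hv.le_one z hz

theorem hFun_isBoundedUnder (hD : IsOpen D) (z : ℂ) :
    IsBoundedUnder (· ≤ ·) (𝓝[D] z) (hFun A D) :=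
  ⟨1, by
    rw [eventually_map]
    filter_upwards [self_mem_nhdsWithin] with x hx using hFun_le_one hD hx⟩

theorem hFun_isCoboundedUnder (hA : A ⊆ closure D) {z : ℂ} (hz : z ∈ D) :
    IsCoboundedUnder (· ≤ ·) (𝓝[D] z) (hFun A D) := by
  have : (𝓝[D] z).NeBot := mem_closure_iff_nhdsWithin_neBot.1 (subset_closure hz)
  refine IsCoboundedUnder.of_frequently_ge (a := 0) (Eventually.frequently ?_)
  filter_upwards [self_mem_nhdsWithin] with x hx using hFun_nonneg hA hx

theorem omegaC_le_of_eventually (hA : A ⊆ closure D) {z : ℂ} (hz : z ∈ D)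
    {c : ℝ} (h : ∀ᶠ x in 𝓝[D] z, hFun A D x ≤ c) : omegaC A D z ≤ c :=
  limsup_le_of_le (hFun_isCoboundedUnder hA hz) h

theorem hFun_le_omegaC (hD : IsOpen D) {z : ℂ} (hz : z ∈ D) :
    hFun A D z ≤ omegaC A D z :=
  le_limsup_of_le (hFun_isBoundedUnder hD z) fun _ hb => hb.self_of_nhdsWithin hz

theorem omegaC_upperSemicontinuousOn (hD : IsOpen D) (hA : A ⊆ closure D) :
    UpperSemicontinuousOn (omegaC A D) D := by
  intro z _ c hc
  obtain ⟨c', h1, h2⟩ := exists_between hc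
  have h3 := eventually_lt_of_limsup_lt h1 (hFun_isBoundedUnder hD z)
  filter_upwards [eventually_eventually_nhdsWithin.2 h3, self_mem_nhdsWithin] with x hx hxD
  exact (omegaC_le_of_eventually hA hxD (hx.mono fun _ h => h.le)).trans_lt h2

theorem omegaC_nonneg (hD : IsOpen D) (hA : A ⊆ closure D) {z : ℂ} (hz : z ∈ D) :
    0 ≤ omegaC A D z :=
  (hFun_nonneg hA hz).trans (hFun_le_omegaC hD hz)

theorem omegaC_le_one (hD : IsOpen D) (hA : A ⊆ closure D) {z : ℂ} (hz : z ∈ D) :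
    omegaC A D z ≤ 1 :=
  omegaC_le_of_eventually hA hz (by
    filter_upwards [self_mem_nhdsWithin] with x hx using hFun_le_one hD hx)

theorem IsUnitSubharmonic.le_omegaC (hD : IsOpen D) (hA : A ⊆ closure D) {v : ℂ → ℝ}
    (hv : IsUnitSubharmonic v D) (hvA : VanishesAt v D A) {z : ℂ} (hz : z ∈ D) :
    v z ≤ omegaC A D z :=
  (hv.le_hFun hA hvA hz).trans (hFun_le_omegaC hD hz)

theorem circleAverage_le_of_lipschitz {φ : ℂ → ℝ} {n : ℕ}
    (h : ∀ x y, φ x ≤ φ y + n * dist x y) (x y : ℂ) (r : ℝ) :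
    Real.circleAverage φ x r ≤ Real.circleAverage φ y r + n * dist x y := by
  have hφ := continuous_of_le_add_dist h
  have h1 : Real.circleAverage (fun w => φ (w + (y - x)) + n * dist x y) x r =
      Real.circleAverage φ y r + n * dist x y := by
    rw [Real.circleAverage_fun_add (ContinuousOn.circleIntegrable' (by fun_prop))
      (circleIntegrable_const _ _ _), Real.circleAverage_const]
    congr 1
    simp only [Real.circleAverage_def, circleMap]
    congr 2
    funext θ
    congr 1
    ring
  rw [← h1]
  refine Real.circleAverage_mono (ContinuousOn.circleIntegrable' (by fun_prop))
    (ContinuousOn.circleIntegrable' (by fun_prop)) fun w _ => ?_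
  refine (h w (w + (y - x))).trans_eq ?_
  congr 2
  simp [dist_eq_norm]

theorem omegaC_isUnitSubharmonic (hD : IsOpen D) (hA : A ⊆ closure D) :
    IsUnitSubharmonic (omegaC A D) D := by
  have husc := omegaC_upperSemicontinuousOn hD hA
  refine ⟨husc, fun _ => omegaC_nonneg hD hA, fun _ => omegaC_le_one hD hA, fun z hz => ?_⟩
  have hev : ∀ᶠ r in 𝓝[>] (0 : ℝ), closedBall z (2 * r) ⊆ D := by
    have : Tendsto (fun r : ℝ => 2 * r) (𝓝 0) (𝓝 (2 * 0)) := tendsto_id.const_mul _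
    rw [mul_zero] at this
    exact (this.eventually (_root_.eventually_closedBall_subset (hD.mem_nhds hz))).filter_mono
      nhdsWithin_le_nhds
  filter_upwards [hev, self_mem_nhdsWithin] with r hr hr0
  have hr0 : 0 < r := hr0
  have hsub : ∀ x ∈ ball z r, closedBall x r ⊆ closedBall z (2 * r) := by
    intro x hx
    refine closedBall_subset_closedBall' ?_
    have := (mem_ball.1 hx).le
    linarith
  obtain ⟨φ, hφl, hφu, hφ1, hφt⟩ := (husc.mono hr).exists_lipschitz_approx
    (fun z hz => omegaC_nonneg hD hA (hr hz)) (fun z hz => omegaC_le_one hD hA (hr hz))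
  have hφc : ∀ n, Continuous (φ n) := fun n => continuous_of_le_add_dist (hφl n)
  have hzs : sphere z |r| ⊆ closedBall z (2 * r) := by
    rw [abs_of_pos hr0]
    exact sphere_subset_closedBall.trans (hsub z (mem_ball_self hr0))
  have hn : ∀ n, omegaC A D z ≤ Real.circleAverage (φ n) z r := by
    intro n
    refine le_of_forall_pos_le_add fun ε hε => ?_
    refine omegaC_le_of_eventually hA hz ?_
    have hd : ∀ᶠ x in 𝓝[D] z, n * dist x z < ε := by
      have : Tendsto (fun x : ℂ => n * dist x z) (𝓝 z) (𝓝 (n * dist z z)) :=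
        (by fun_prop : Continuous fun x : ℂ => n * dist x z).tendsto z
      rw [dist_self, mul_zero] at this
      exact (this.eventually_lt_const hε).filter_mono nhdsWithin_le_nhds
    filter_upwards [hd, self_mem_nhdsWithin, mem_nhdsWithin_of_mem_nhds (ball_mem_nhds z hr0)]
      with x hx hxD hxr
    refine hFun_le_of_forall hD fun v hv hvA => ?_
    have hxs := (hsub x hxr).trans hr
    have hxs' : sphere x |r| ⊆ closedBall z (2 * r) := by
      rw [abs_of_pos hr0]; exact sphere_subset_closedBall.trans (hsub x hxr)
    calc v x ≤ Real.circleAverage v x r := hv.le_circleAverage hr0 hxs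
      _ ≤ Real.circleAverage (φ n) x r := by
        refine Real.circleAverage_mono (hv.circleIntegrable (hxs'.trans hr))
          ((hφc n).continuousOn.circleIntegrable') fun w hw => ?_
        exact (hv.le_omegaC hD hA hvA (hr (hxs' hw))).trans (hφu n w (hxs' hw))
      _ ≤ Real.circleAverage (φ n) z r + n * dist x z := circleAverage_le_of_lipschitz (hφl n) x z r
      _ ≤ _ := by linarith
  refine ge_of_tendsto' (tendsto_circleAverage (u := omegaC A D)
    (fun n => ((hφc n).comp (continuous_circleMap z r)).measurable)
    (fun n w hw => ?_) fun w hw => hφt w (hzs hw)) hn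
  rw [abs_of_nonneg ((omegaC_nonneg hD hA (hr (hzs hw))).trans (hφu n _ (hzs hw)))]
  exact hφ1 n _ (hzs hw)

end omega

section logPotential
variable {K : Set ℂ} {s : ℝ → ℂ} {μ : Measure ℝ}

theorem IsCompact.exists_abs_log_norm_sub_le {K L : Set ℂ} (hK : IsCompact K) (hL : IsCompact L)
    (h : L ⊆ Kᶜ) : ∃ C, ∀ z ∈ L, ∀ k ∈ K, |Real.log ‖z - k‖| ≤ C := by
  have hc : ContinuousOn (fun p : ℂ × ℂ => Real.log ‖p.1 - p.2‖) (L ×ˢ K) := by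
    refine ContinuousOn.log (by fun_prop) fun p hp => ?_
    rw [norm_ne_zero_iff, sub_ne_zero]
    rintro heq
    exact h hp.1 (heq ▸ hp.2)
  obtain ⟨C, hC⟩ := (hL.prod hK).exists_bound_of_continuousOn hc
  exact ⟨C, fun z hz k hk => hC (z, k) ⟨hz, hk⟩⟩

theorem integrable_log_norm_sub [IsFiniteMeasure μ] (hK : IsCompact K) (hs : Measurable s)
    (hsK : ∀ t, s t ∈ K) {z : ℂ} (hz : z ∉ K) :
    Integrable (fun t => Real.log ‖z - s t‖) μ := by
  obtain ⟨C, hC⟩ := hK.exists_abs_log_norm_sub_le (isCompact_singleton (x := z)) (by simpa)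
  refine Integrable.of_bound (C := C) ?_ (Eventually.of_forall fun t => hC z rfl _ (hsK t))
  exact (Real.measurable_log.comp ((measurable_const.sub hs).norm)).aestronglyMeasurable

theorem continuousOn_integral_log_norm_sub [IsFiniteMeasure μ] (hK : IsCompact K)
    (hs : Measurable s) (hsK : ∀ t, s t ∈ K) :
    ContinuousOn (fun z => ∫ t, Real.log ‖z - s t‖ ∂μ) Kᶜ := by
  intro z hz
  refine ContinuousAt.continuousWithinAt ?_
  obtain ⟨r, hr0, hr⟩ := nhds_basis_closedBall.mem_iff.1 (hK.isClosed.isOpen_compl.mem_nhds hz)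
  obtain ⟨C, hC⟩ := hK.exists_abs_log_norm_sub_le (isCompact_closedBall z r) hr
  refine continuousAt_of_dominated (bound := fun _ => C) (Eventually.of_forall fun x => ?_) ?_
    (integrable_const _) (Eventually.of_forall fun t => ?_)
  · exact (Real.measurable_log.comp ((measurable_const.sub hs).norm)).aestronglyMeasurable
  · filter_upwards [closedBall_mem_nhds z hr0] with x hx
    exact Eventually.of_forall fun t => hC x hx _ (hsK t)
  · refine ContinuousAt.log (by fun_prop) ?_
    rw [norm_ne_zero_iff, sub_ne_zero]
    rintro heq
    exact hz (heq ▸ hsK t)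

theorem circleAverage_integral_log_norm_sub [IsFiniteMeasure μ] (hK : IsCompact K)
    (hs : Measurable s) (hsK : ∀ t, s t ∈ K) {z : ℂ} {r : ℝ} (hz : closedBall z |r| ⊆ Kᶜ) :
    Real.circleAverage (fun z => ∫ t, Real.log ‖z - s t‖ ∂μ) z r =
      ∫ t, Real.log ‖z - s t‖ ∂μ := by
  obtain ⟨C, hC⟩ := hK.exists_abs_log_norm_sub_le (isCompact_closedBall z |r|) hz
  rw [Real.circleAverage_def, intervalIntegral_integral_swap, ← integral_smul]
  · refine integral_congr_ae (Eventually.of_forall fun t => ?_)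
    have := AnalyticOnNhd.circleAverage_log_norm_of_ne_zero (c := z) (R := r)
      (g := fun z => z - s t) (fun _ _ => by fun_prop) (fun u hu => by
        rw [sub_ne_zero]
        rintro heq
        exact hz hu (heq ▸ hsK t))
    rw [Real.circleAverage_def] at this
    exact this
  · have : IsFiniteMeasure (volume.restrict (uIoc 0 (2 * π))) := ⟨by simp [uIoc]⟩
    refine Integrable.of_bound (C := C) ?_ (Eventually.of_forall fun p => ?_)
    · refine Measurable.aestronglyMeasurable ?_
      refine Real.measurable_log.comp (Measurable.norm ?_)
      exact ((continuous_circleMap z r).measurable.comp measurable_fst).sub (hs.comp measurable_snd)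
    · exact hC _ (sphere_subset_closedBall (circleMap_mem_sphere' z r p.1)) _ (hsK _)

end logPotential

theorem le_integral_log_sub {x δ : ℝ} (hx : 0 ≤ x) (hδ : 0 < δ) :
    δ * (Real.log δ - 2) ≤ ∫ t in (0 : ℝ)..δ, Real.log (x - t) := by
  rw [intervalIntegral.integral_comp_sub_left (fun t => Real.log t), integral_log, sub_zero]
  rcases le_or_gt δ x with h | h
  · have h1 : Real.log δ ≤ Real.log x := Real.log_le_log hδ h
    rcases h.eq_or_lt with rfl | h'
    · simp; linarith
    have h2 : Real.log (x - δ) ≤ Real.log x := Real.log_le_log (by linarith) (by linarith)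
    nlinarith [mul_le_mul_of_nonneg_left h1 hδ.le,
      mul_le_mul_of_nonneg_left h2 (by linarith : 0 ≤ x - δ)]
  · have key : ∀ y : ℝ, 0 ≤ y → y * Real.log δ + (y - δ) ≤ y * Real.log y := by
      intro y hy
      rcases hy.eq_or_lt with rfl | hy
      · simp; linarith
      have h3 := Real.log_le_sub_one_of_pos (div_pos hδ hy)
      rw [Real.log_div hδ.ne' hy.ne'] at h3
      have h4 := mul_le_mul_of_nonneg_left h3 hy.le
      have h5 : y * (δ / y - 1) = δ - y := by field_simp
      rw [h5] at h4
      linarith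
    have h6 := key x hx
    have h7 := key (δ - x) (by linarith)
    have h8 : Real.log (x - δ) = Real.log (δ - x) := by rw [← Real.log_neg_eq_log]; congr 1; ring
    rw [h8]
    linarith

/-- A measurable selection of points at prescribed distances on a path. -/
theorem exists_measurable_dist_eq {γ : ℝ → ℂ} (hγ : Continuous γ) {T : ℝ} (hT : 0 < T) {δ : ℝ}
    (hδT : δ ≤ ‖γ T - γ 0‖) :
    ∃ s : ℝ → ℂ, Measurable s ∧ (∀ t, s t ∈ γ '' Icc 0 T) ∧
      ∀ t ∈ Icc 0 δ, ‖s t - γ 0‖ = t := by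
  set S : ℝ → Set ℝ := fun t => {x ∈ Icc 0 T | t ≤ ‖γ x - γ 0‖} with hS
  set τ : ℝ → ℝ := fun t => sInf (S t) with hτ
  have hSc : ∀ t, IsClosed (S t) := fun t =>
    isClosed_Icc.inter (isClosed_le continuous_const
      (by fun_prop : Continuous fun x => ‖γ x - γ 0‖))
  have hSb : ∀ t, BddBelow (S t) := fun t => ⟨0, fun x hx => hx.1.1⟩
  have hSn : ∀ t ≤ δ, (S t).Nonempty := fun t ht => ⟨T, ⟨hT.le, le_rfl⟩, ht.trans hδT⟩
  have hτm : ∀ t ≤ δ, τ t ∈ S t := fun t ht => (hSc t).csInf_mem (hSn t ht) (hSb t)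
  have hmono : Monotone fun t => τ (min t δ) := by
    intro t t' htt'
    refine csInf_le_csInf (hSb _) (hSn _ (min_le_right _ _)) fun x hx => ⟨hx.1, le_trans ?_ hx.2⟩
    exact min_le_min_right _ htt'
  refine ⟨fun t => γ (τ (min t δ)), hγ.measurable.comp hmono.measurable,
    fun t => ⟨_, (hτm _ (min_le_right _ _)).1, rfl⟩, fun t ht => ?_⟩
  simp only [min_eq_left ht.2]
  have hmem := hτm t ht.2
  refine le_antisymm ?_ hmem.2
  obtain ⟨x, hx, hxt⟩ := intermediate_value_Icc (f := fun x => ‖γ x - γ 0‖) hmem.1.1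
    (by fun_prop) (show t ∈ Icc _ _ from ⟨by simpa using ht.1, hmem.2⟩)
  have hxS : x ∈ S t := ⟨⟨hx.1, hx.2.trans hmem.1.2⟩, hxt.ge⟩
  have : x = τ t := le_antisymm hx.2 (csInf_le (hSb t) hxS)
  rw [← this]
  exact hxt.le

/-- A barrier at an endpoint of a path. -/
theorem exists_barrier {γ : ℝ → ℂ} (hγ : Continuous γ) {T : ℝ} (hT : 0 < T) (hγT : γ T ≠ γ 0)
    {R : ℝ} (hR : 0 < R) (Λ : ℝ) :
    ∃ δ > 0, ∃ b : ℂ → ℝ, ContinuousOn b (γ '' Icc 0 T)ᶜ ∧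
      (∀ z ∉ γ '' Icc 0 T, ∀ᶠ r in 𝓝[>] (0 : ℝ), Real.circleAverage b z r ≤ b z) ∧
      (∀ z ∉ γ '' Icc 0 T, 0 ≤ b z) ∧
      (∀ z ∉ γ '' Icc 0 T, ‖z - γ 0‖ ≤ δ → b z ≤ 3) ∧
      (∀ z ∉ γ '' Icc 0 T, R ≤ ‖z - γ 0‖ → Λ ≤ b z) := by
  set K := γ '' Icc 0 T with hK
  have hKc : IsCompact K := isCompact_Icc.image hγ
  set δ := min ‖γ T - γ 0‖ (min (R / 2) (R / 2 * Real.exp (-Λ))) with hδ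
  have hδ0 : 0 < δ := by
    refine lt_min (norm_pos_iff.2 (sub_ne_zero.2 hγT)) (lt_min (by positivity) (by positivity))
  have hδ1 : δ ≤ R / 2 := (min_le_right _ _).trans (min_le_left _ _)
  have hδ2 : δ ≤ R / 2 * Real.exp (-Λ) := (min_le_right _ _).trans (min_le_right _ _)
  obtain ⟨s, hs, hsK, hsd⟩ := exists_measurable_dist_eq (δ := δ) hγ hT (min_le_left _ _)
  set μ : Measure ℝ := volume.restrict (Ioc 0 δ) with hμ
  set P : ℂ → ℝ := fun z => ∫ t, Real.log ‖z - s t‖ ∂μ with hP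
  have hint : ∀ z ∉ K, Integrable (fun t => Real.log ‖z - s t‖) μ := fun z hz =>
    integrable_log_norm_sub hKc hs hsK hz
  have hPc : ContinuousOn P Kᶜ := continuousOn_integral_log_norm_sub hKc hs hsK
  have hconst : ∀ c : ℝ, ∫ _t, c ∂μ = δ * c := by
    intro c
    rw [hμ, setIntegral_const]
    simp [hδ0.le]
  have hpos : ∀ z ∉ K, ∀ t, 0 < ‖z - s t‖ := by
    intro z hz t
    rw [norm_pos_iff, sub_ne_zero]
    rintro rfl
    exact hz (hsK t)
  refine ⟨δ, hδ0, fun z => δ⁻¹ * P z + (2 - Real.log δ), by fun_prop, ?_, ?_, ?_, ?_⟩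
  · intro z hz
    filter_upwards [hKc.isClosed.isOpen_compl.eventually_closedBall_subset hz,
      self_mem_nhdsWithin] with r hr hr0
    have hr0 : 0 < r := hr0
    have hs' : sphere z |r| ⊆ Kᶜ := by
      rw [abs_of_pos hr0]; exact sphere_subset_closedBall.trans hr
    have hi : CircleIntegrable P z r := (hPc.mono hs').circleIntegrable'
    have hi2 : CircleIntegrable (fun z => δ⁻¹ * P z) z r := hi.const_mul _
    rw [Real.circleAverage_fun_add hi2 (circleIntegrable_const _ _ _), Real.circleAverage_const]
    have := Real.circleAverage_fun_smul (a := δ⁻¹) (f := P) (c := z) (R := r)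
    simp only [smul_eq_mul] at this
    rw [this, circleAverage_integral_log_norm_sub hKc hs hsK (by rwa [abs_of_pos hr0])]
  · intro z hz
    have h1 : δ * (Real.log δ - 2) ≤ P z := by
      refine (le_integral_log_sub (norm_nonneg (z - γ 0)) hδ0).trans ?_
      rw [intervalIntegral.integral_of_le hδ0.le]
      have hne : ∀ᵐ t ∂μ, t ≠ ‖z - γ 0‖ :=
        ae_restrict_of_ae (by simp [ae_iff, measure_singleton])
      refine integral_mono_ae ?_ (hint z hz) ?_
      · have h2 : IntervalIntegrable (fun t => Real.log (‖z - γ 0‖ - t)) volume 0 δ := by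
          have := (intervalIntegral.intervalIntegrable_log' (a := ‖z - γ 0‖ - 0)
            (b := ‖z - γ 0‖ - δ)).comp_sub_left ‖z - γ 0‖
          simpa using this
        exact (intervalIntegrable_iff_integrableOn_Ioc_of_le hδ0.le).1 h2
      · filter_upwards [hne, ae_restrict_mem measurableSet_Ioc] with t ht1 ht2
        rw [← Real.log_abs]
        refine Real.log_le_log (abs_pos.2 (sub_ne_zero.2 ht1.symm)) ?_
        have := abs_norm_sub_norm_le (z - γ 0) (s t - γ 0)
        rwa [hsd t ⟨ht2.1.le, ht2.2⟩, sub_sub_sub_cancel_right] at this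
    have h2 : δ⁻¹ * (δ * (Real.log δ - 2)) ≤ δ⁻¹ * P z := by gcongr
    rw [inv_mul_cancel_left₀ hδ0.ne'] at h2
    linarith
  · intro z hz hzδ
    have h1 : P z ≤ δ * Real.log (2 * δ) := by
      rw [← hconst]
      refine integral_mono_ae (hint z hz) (integrable_const _) ?_
      filter_upwards [ae_restrict_mem measurableSet_Ioc] with t ht
      refine Real.log_le_log (hpos z hz t) ?_
      have h3 := norm_sub_le (z - γ 0) (s t - γ 0)
      rw [hsd t ⟨ht.1.le, ht.2⟩, sub_sub_sub_cancel_right] at h3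
      linarith [ht.2]
    have h2 : δ⁻¹ * P z ≤ δ⁻¹ * (δ * Real.log (2 * δ)) := by gcongr
    rw [inv_mul_cancel_left₀ hδ0.ne', Real.log_mul two_ne_zero hδ0.ne'] at h2
    have := Real.log_two_lt_d9
    linarith
  · intro z hz hzR
    have h1 : δ * Real.log (R / 2) ≤ P z := by
      rw [← hconst]
      refine integral_mono_ae (integrable_const _) (hint z hz) ?_
      filter_upwards [ae_restrict_mem measurableSet_Ioc] with t ht
      refine Real.log_le_log (by positivity) ?_
      have h3 := norm_sub_norm_le (z - γ 0) (s t - γ 0)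
      rw [hsd t ⟨ht.1.le, ht.2⟩, sub_sub_sub_cancel_right] at h3
      linarith [ht.2]
    have h2 : δ⁻¹ * (δ * Real.log (R / 2)) ≤ δ⁻¹ * P z := by gcongr
    rw [inv_mul_cancel_left₀ hδ0.ne'] at h2
    have h3 := Real.log_le_log hδ0 hδ2
    rw [Real.log_mul (by positivity) (by positivity), Real.log_exp] at h3
    linarith

/-- A bounded open set `D` with a relatively open piece `A` of its boundary all of whose points are
accessible from the complement of `D` by a path. -/
structure GoodPair (D A : Set ℂ) : Prop where
  isOpen : IsOpen D
  isBounded : Bornology.IsBounded D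
  subset : A ⊆ frontier D
  nhds : ∀ a ∈ A, ∃ r > 0, frontier D ∩ ball a r ⊆ A
  path : ∀ a ∈ A, ∃ γ : ℝ → ℂ, Continuous γ ∧ (∀ t, γ t ∉ D) ∧ γ 0 = a ∧ ∃ t > 0, γ t ≠ a

theorem IsUnitSubharmonic.exists_le_of_path {γ : ℝ → ℂ} (hγ : Continuous γ)
    (hγT : ∃ t > 0, γ t ≠ γ 0) {R : ℝ} (hR : 0 < R) {ε : ℝ} (hε : 0 < ε) :
    ∃ r > 0, ∀ (V : Set ℂ) (u : ℂ → ℝ), IsOpen V → V ⊆ ball (γ 0) R → (∀ t, γ t ∉ V) →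
      IsUnitSubharmonic u V →
      (∀ x ∈ frontier V ∩ ball (γ 0) R, ∀ ε > 0, ∀ᶠ z in 𝓝[V] x, u z ≤ ε) →
      ∀ z ∈ V ∩ ball (γ 0) r, u z ≤ ε := by
  obtain ⟨T, hT, hT'⟩ := hγT
  obtain ⟨δ, hδ, b, hbc, hbm, hb0, hb3, hbΛ⟩ := exists_barrier hγ hT hT' (half_pos hR) (3 / ε)
  refine ⟨δ, hδ, fun V u hV hVR hVγ hu hbd z hz => ?_⟩
  have hVK : V ⊆ (γ '' Icc 0 T)ᶜ := by
    rintro x hx ⟨t, -, rfl⟩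
    exact hVγ t hx
  have hle : u z ≤ ε / 3 * b z := by
    refine hu.le_of_boundary (h := fun z => ε / 3 * b z) hV (isBounded_ball.subset hVR)
      (continuousOn_const.mul (hbc.mono hVK)) (fun x hx => ?_) (fun x hx ε' hε' => ?_) z hz.1
    · filter_upwards [hbm x (hVK hx)] with r hr
      have := Real.circleAverage_fun_smul (a := ε / 3) (f := b) (c := x) (R := r)
      simp only [smul_eq_mul] at this
      rw [this]
      gcongr
    · by_cases hxR : x ∈ ball (γ 0) R
      · filter_upwards [hbd x ⟨hx, hxR⟩ ε' hε', self_mem_nhdsWithin] with y hy hyV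
        have : 0 ≤ ε / 3 * b y := mul_nonneg (by positivity) (hb0 y (hVK hyV))
        linarith
      · have hopen : {y : ℂ | R / 2 < ‖y - γ 0‖} ∈ 𝓝 x := by
          refine (isOpen_lt continuous_const (by fun_prop)).mem_nhds ?_
          rw [mem_ball, not_lt, dist_eq_norm] at hxR
          simp only [Set.mem_ofPred_eq]
          linarith
        filter_upwards [mem_nhdsWithin_of_mem_nhds hopen, self_mem_nhdsWithin] with y hy hyV
        have h1 := hbΛ y (hVK hyV) (le_of_lt hy)
        have h2 : ε / 3 * (3 / ε) ≤ ε / 3 * b y := by gcongr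
        have h3 : ε / 3 * (3 / ε) = 1 := by field_simp
        have h4 := hu.le_one y hyV
        linarith
  have h5 := hb3 z (hVK hz.1) (by rw [← dist_eq_norm]; exact (mem_ball.1 hz.2).le)
  have : ε / 3 * b z ≤ ε / 3 * 3 := by gcongr
  linarith

theorem isUnitSubharmonic_log_max {F : ℂ → ℂ} {V : Set ℂ} (hV : IsOpen V)
    (hF : DifferentiableOn ℂ F V) {M s : ℝ} (hM : 0 < M) (hs : 0 < s) (hFM : ∀ z ∈ V, ‖F z‖ ≤ M) :
    IsUnitSubharmonic
      (fun z => (Real.log (max ‖F z‖ (M * Real.exp (-s))) - (Real.log M - s)) / s) V := by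
  set η := M * Real.exp (-s) with hη
  have hη0 : 0 < η := by positivity
  have hηl : Real.log η = Real.log M - s := by
    rw [hη, Real.log_mul hM.ne' (Real.exp_pos _).ne', Real.log_exp]; ring
  have hηM : η ≤ M := by
    have := Real.exp_le_one_iff.2 (neg_nonpos.2 hs.le)
    nlinarith
  have hmpos : ∀ z, 0 < max ‖F z‖ η := fun z => lt_max_of_lt_right hη0
  have hcont : ContinuousOn (fun z => (Real.log (max ‖F z‖ η) - (Real.log M - s)) / s) V := by
    refine ContinuousOn.div_const (ContinuousOn.sub (ContinuousOn.log ?_ fun z _ => (hmpos z).ne')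
      continuousOn_const) s
    exact (hF.continuousOn.norm).sup continuousOn_const
  have hnn : ∀ z, 0 ≤ (Real.log (max ‖F z‖ η) - (Real.log M - s)) / s := by
    intro z
    refine div_nonneg ?_ hs.le
    rw [← hηl, sub_nonneg]
    exact Real.log_le_log hη0 (le_max_right _ _)
  refine ⟨hcont.upperSemicontinuousOn, fun z _ => hnn z, fun z hz => ?_, fun z hz => ?_⟩
  · rw [div_le_one hs]
    have := Real.log_le_log (hmpos z) (max_le (hFM z hz) hηM)
    linarith
  · rcases le_or_gt ‖F z‖ η with h | h
    · refine Eventually.of_forall fun r => ?_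
      rw [max_eq_right h, hηl, sub_self, zero_div]
      exact Real.circleAverage_nonneg_of_nonneg fun x _ => hnn x
    · have hne : V ∩ F ⁻¹' {0}ᶜ ∈ 𝓝 z := by
        refine (hF.continuousOn.isOpen_inter_preimage hV isOpen_compl_singleton).mem_nhds ⟨hz, ?_⟩
        simpa using norm_pos_iff.1 (hη0.trans h)
      filter_upwards [(_root_.eventually_closedBall_subset hne).filter_mono nhdsWithin_le_nhds,
        self_mem_nhdsWithin] with r hr hr0
      have hr0 : 0 < r := hr0
      have habs : |r| = r := abs_of_pos hr0
      have hrV : closedBall z |r| ⊆ V := by rw [habs]; exact fun x hx => (hr hx).1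
      have hrN : ∀ x ∈ closedBall z |r|, F x ≠ 0 := by rw [habs]; exact fun x hx => (hr hx).2
      have h1 := AnalyticOnNhd.circleAverage_log_norm_of_ne_zero (c := z) (R := r) (g := F)
        ((hF.analyticOnNhd hV).mono hrV) hrN
      have hsV := (sphere_subset_closedBall.trans hrV)
      have hi0 : CircleIntegrable (fun x => Real.log ‖F x‖) z r :=
        ContinuousOn.circleIntegrable' (ContinuousOn.log ((hF.continuousOn.mono hsV).norm)
          fun x hx => norm_ne_zero_iff.2 (hrN x (sphere_subset_closedBall hx)))
      have hi : CircleIntegrable (fun x => (Real.log ‖F x‖ - (Real.log M - s)) / s) z r :=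
        ContinuousOn.circleIntegrable' (((ContinuousOn.log ((hF.continuousOn.mono hsV).norm)
          fun x hx => norm_ne_zero_iff.2 (hrN x (sphere_subset_closedBall hx))).sub
            continuousOn_const).div_const s)
      have h2 := Real.circleAverage_mono hi (hcont.mono hsV).circleIntegrable' fun x hx => by
        have h3 : 0 < ‖F x‖ := norm_pos_iff.2 (hrN x (sphere_subset_closedBall hx))
        have h4 := Real.log_le_log h3 (le_max_left ‖F x‖ η)
        have h5 : (Real.log ‖F x‖ - (Real.log M - s)) / s ≤
          (Real.log (max ‖F x‖ η) - (Real.log M - s)) / s := by gcongr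
        exact h5
      refine le_trans (le_of_eq ?_) h2
      rw [max_eq_left h.le]
      have h6 : (fun x => (Real.log ‖F x‖ - (Real.log M - s)) / s) =
          fun x => s⁻¹ • (Real.log ‖F x‖ - (Real.log M - s)) := by
        funext x; rw [smul_eq_mul]; ring
      rw [h6, Real.circleAverage_fun_smul, Real.circleAverage_fun_sub hi0
        (circleIntegrable_const _ _ _), Real.circleAverage_const, h1, smul_eq_mul]
      ring

theorem log_max_sub_div_le {x M s ε : ℝ} (hM : 0 < M) (hs : 0 < s) (hε : 0 < ε)
    (h : x ≤ M * Real.exp (-s) + ε * s * (M * Real.exp (-s))) :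
    (Real.log (max x (M * Real.exp (-s))) - (Real.log M - s)) / s ≤ ε := by
  rw [div_le_iff₀ hs]
  set η := M * Real.exp (-s) with hη
  have hη0 : 0 < η := by positivity
  have hηl : Real.log η = Real.log M - s := by
    rw [hη, Real.log_mul hM.ne' (Real.exp_pos _).ne', Real.log_exp]; ring
  rw [← hηl]
  have h1 : max x η ≤ η * (1 + ε * s) := by
    refine max_le (by linarith) ?_
    nlinarith [mul_pos hη0 (mul_pos hε hs)]
  have h2 := Real.log_le_log (lt_max_of_lt_right hη0) h1
  rw [Real.log_mul hη0.ne' (by positivity)] at h2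
  have h3 := Real.log_le_sub_one_of_pos (show 0 < 1 + ε * s by positivity)
  linarith

theorem norm_le_of_log_max_le {x M s c : ℝ} (hM : 0 < M) (hs : 0 < s)
    (h : (Real.log (max x (M * Real.exp (-s))) - (Real.log M - s)) / s ≤ c) :
    x ≤ M * Real.exp (-(s * (1 - c))) := by
  rw [div_le_iff₀ hs] at h
  have h0 : 0 < max x (M * Real.exp (-s)) := lt_max_of_lt_right (by positivity)
  have h1 : Real.log (max x (M * Real.exp (-s))) ≤ Real.log M + -(s * (1 - c)) := by linarith
  rw [Real.log_le_iff_le_exp h0, Real.exp_add, Real.exp_log hM] at h1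
  exact (le_max_left _ _).trans h1

/-- The two constants theorem. -/
theorem norm_le_two_constants {D A : Set ℂ} (hD : IsOpen D) (hA : A ⊆ closure D) {F : ℂ → ℂ}
    (hF : DifferentiableOn ℂ F D) {M s : ℝ} (hM : 0 < M) (hs : 0 < s) (hFM : ∀ z ∈ D, ‖F z‖ ≤ M)
    (hFA : ∀ a ∈ A, ∀ ε > 0, ∀ᶠ z in 𝓝[D] a, ‖F z‖ ≤ M * Real.exp (-s) + ε) {z : ℂ}
    (hz : z ∈ D) : ‖F z‖ ≤ M * Real.exp (-(s * (1 - omegaC A D z))) := by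
  refine norm_le_of_log_max_le hM hs ((isUnitSubharmonic_log_max hD hF hM hs hFM).le_omegaC hD hA
    (fun a ha ε hε => ?_) hz)
  filter_upwards [hFA a ha (ε * s * (M * Real.exp (-s))) (by positivity)] with x hx
  exact log_max_sub_div_le hM hs hε hx

namespace GoodPair
variable {D A : Set ℂ}

theorem subset_closure (h : GoodPair D A) : A ⊆ closure D := h.subset.trans frontier_subset_closure

theorem vanishesAt_omegaC (h : GoodPair D A) : VanishesAt (omegaC A D) D A := by
  intro a ha ε hε
  obtain ⟨R, hR, hRA⟩ := h.nhds a ha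
  obtain ⟨γ, hγ, hγD, rfl, hγT⟩ := h.path a ha
  obtain ⟨r, hr, hle⟩ := IsUnitSubharmonic.exists_le_of_path hγ hγT hR hε
  have hh : ∀ z ∈ D ∩ (ball (γ 0) R ∩ ball (γ 0) r), hFun A D z ≤ ε := by
    intro z hz
    refine hFun_le_of_forall h.isOpen fun v hv hvA => ?_
    refine hle (D ∩ ball (γ 0) R) v (h.isOpen.inter isOpen_ball) inter_subset_right
      (fun t ht => hγD t ht.1) (hv.mono inter_subset_left) (fun x hx ε' hε' => ?_) z
      ⟨⟨hz.1, hz.2.1⟩, hz.2.2⟩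
    rw [frontier_inter_open_inter isOpen_ball] at hx
    exact (hvA x (hRA hx) ε' hε').filter_mono (nhdsWithin_mono _ inter_subset_left)
  have hU : ball (γ 0) R ∩ ball (γ 0) r ∈ 𝓝 (γ 0) :=
    inter_mem (ball_mem_nhds _ hR) (ball_mem_nhds _ hr)
  filter_upwards [mem_nhdsWithin_of_mem_nhds hU, self_mem_nhdsWithin] with z hz hzD
  refine omegaC_le_of_eventually h.subset_closure hzD ?_
  filter_upwards [self_mem_nhdsWithin,
    mem_nhdsWithin_of_mem_nhds ((isOpen_ball.inter isOpen_ball).mem_nhds hz)] with y hy1 hy2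
  exact hh y ⟨hy1, hy2⟩

theorem omegaC_isUnitSubharmonic (h : GoodPair D A) : IsUnitSubharmonic (omegaC A D) D :=
  _root_.omegaC_isUnitSubharmonic h.isOpen h.subset_closure

end GoodPair

/-- If the average over a circle of a function bounded by one is at least one, the function is one
on the circle. -/
theorem eq_one_of_one_le_circleAverage {u : ℂ → ℝ} {V : Set ℂ} (hu : IsUnitSubharmonic u V)
    {z : ℂ} {r : ℝ} (hr : 0 < r) (hV : sphere z r ⊆ V) (h1 : 1 ≤ Real.circleAverage u z r)
    {w : ℂ} (hw : w ∈ sphere z r) : u w = 1 := by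
  have hV' : ∀ θ, circleMap z r θ ∈ V := fun θ => hV (circleMap_mem_sphere z hr.le θ)
  have hV2 : sphere z |r| ⊆ V := by rwa [abs_of_pos hr]
  have hint : IntervalIntegrable (fun θ => 1 - u (circleMap z r θ)) volume 0 (2 * π) :=
    intervalIntegrable_const.sub (hu.circleIntegrable hV2)
  have hnn : ∀ θ, 0 ≤ 1 - u (circleMap z r θ) := fun θ => by
    have := hu.le_one _ (hV' θ); linarith
  have hzero : ∫ θ in (0 : ℝ)..(2 * π), (1 - u (circleMap z r θ)) = 0 := by
    refine le_antisymm ?_ (intervalIntegral.integral_nonneg Real.two_pi_pos.le fun θ _ => hnn θ)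
    rw [intervalIntegral.integral_sub intervalIntegrable_const (hu.circleIntegrable hV2)]
    rw [Real.circleAverage_def, smul_eq_mul, ← div_eq_inv_mul, one_le_div Real.two_pi_pos] at h1
    simp only [intervalIntegral.integral_const, sub_zero, smul_eq_mul, mul_one]
    linarith
  rw [intervalIntegral.integral_of_le Real.two_pi_pos.le,
    integral_eq_zero_iff_of_nonneg (fun θ => hnn θ)
      ((intervalIntegrable_iff_integrableOn_Ioc_of_le Real.two_pi_pos.le).1 hint)] at hzero
  by_contra hne
  have hlt : u w < 1 := lt_of_le_of_ne (hu.le_one w (hV hw)) hne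
  set U : Set ℝ := {θ | u (circleMap z r θ) < 1} with hU
  have hUo : IsOpen U := by
    rw [isOpen_iff_mem_nhds]
    intro θ hθ
    exact (tendsto_nhdsWithin_iff.2 ⟨(continuous_circleMap z r).tendsto θ,
      Eventually.of_forall hV'⟩).eventually (hu.usc _ (hV' θ) 1 hθ)
  have hw' := hw
  rw [← abs_of_pos hr, ← image_circleMap_Ioc] at hw'
  obtain ⟨θ₀, hθ₀, hθw⟩ := hw'
  have hθU : θ₀ ∈ U := by
    simp only [hU, Set.mem_ofPred_eq]; rwa [hθw]
  have hcl : θ₀ ∈ closure (Ioo 0 (2 * π)) := by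
    rw [closure_Ioo Real.two_pi_pos.ne]; exact Ioc_subset_Icc_self hθ₀
  obtain ⟨θ₁, h2, h3⟩ := mem_closure_iff.1 hcl U hUo hθU
  have hpos := (hUo.inter isOpen_Ioo).measure_pos volume ⟨θ₁, h2, h3⟩
  rw [EventuallyEq, ae_restrict_iff' measurableSet_Ioc, ae_iff] at hzero
  refine hpos.ne' (measure_mono_null ?_ hzero)
  intro θ hθ
  simp only [Set.mem_ofPred_eq, Pi.zero_apply, not_forall]
  refine ⟨Ioo_subset_Ioc_self hθ.2, ?_⟩
  have : u (circleMap z r θ) < 1 := hθ.1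
  intro h
  linarith

namespace GoodPair
variable {D A : Set ℂ}

theorem omegaC_lt_one (h : GoodPair D A) (hc : IsPreconnected D) (hA : A.Nonempty) {z : ℂ}
    (hz : z ∈ D) : omegaC A D z < 1 := by
  have hω := h.omegaC_isUnitSubharmonic
  by_contra! hz1
  have hall : D ⊆ {x ∈ D | omegaC A D x = 1} := by
    refine hc.subset_of_closure_inter_subset ?_ ⟨z, hz, hz, le_antisymm (hω.le_one z hz) hz1⟩ ?_
    · rw [isOpen_iff_mem_nhds]
      rintro x ⟨hx, hx1⟩
      obtain ⟨R, hR, hRD⟩ := Metric.isOpen_iff.1 h.isOpen x hx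
      filter_upwards [ball_mem_nhds x hR] with y hy
      rcases eq_or_ne y x with rfl | hyx
      · exact ⟨hx, hx1⟩
      have hd : 0 < dist y x := dist_pos.2 hyx
      have hcb : closedBall x (dist y x) ⊆ D :=
        (closedBall_subset_ball (mem_ball.1 hy)).trans hRD
      refine ⟨hRD hy, eq_one_of_one_le_circleAverage hω hd (sphere_subset_closedBall.trans hcb)
        ?_ (mem_sphere.2 rfl)⟩
      rw [← hx1]
      exact hω.le_circleAverage hd hcb
    · rintro x ⟨hxc, hxD⟩
      refine ⟨hxD, le_antisymm (hω.le_one x hxD) ?_⟩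
      by_contra! hlt
      have hev := hω.usc x hxD 1 hlt
      rw [h.isOpen.nhdsWithin_eq hxD] at hev
      obtain ⟨y, hy1, hy2⟩ := (mem_closure_iff_frequently.1 hxc |>.and_eventually hev).exists
      exact hy2.ne hy1.2
  obtain ⟨a, ha⟩ := hA
  have : (𝓝[D] a).NeBot := mem_closure_iff_nhdsWithin_neBot.1 (h.subset_closure ha)
  obtain ⟨x, hx1, hx2⟩ := ((h.vanishesAt_omegaC a ha (1 / 2) (by norm_num)).and
    self_mem_nhdsWithin).exists
  have h3 : omegaC A D x = 1 := (hall hx2).2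
  norm_num [h3] at hx1

theorem isOpen_omegaC_lt (h : GoodPair D A) (c : ℝ) : IsOpen {z ∈ D | omegaC A D z < c} := by
  rw [isOpen_iff_mem_nhds]
  rintro x ⟨hx, hxc⟩
  have hev := h.omegaC_isUnitSubharmonic.usc x hx c hxc
  rw [h.isOpen.nhdsWithin_eq hx] at hev
  filter_upwards [hev, h.isOpen.mem_nhds hx] with y hy hyD using ⟨hyD, hy⟩

/-- Every component of a sublevel set of `omegaC` reaches `A`. -/
theorem exists_mem_closure_component (h : GoodPair D A) {c : ℝ} (hc1 : c ≤ 1) {z : ℂ}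
    (hz : z ∈ {z ∈ D | omegaC A D z < c}) :
    ∃ a ∈ A, a ∈ closure (connectedComponentIn {z ∈ D | omegaC A D z < c} z) := by
  classical
  set U := {z ∈ D | omegaC A D z < c} with hU
  set U' := connectedComponentIn U z with hU'
  have hω := h.omegaC_isUnitSubharmonic
  have hUo : IsOpen U := h.isOpen_omegaC_lt c
  have hU'o : IsOpen U' := hUo.connectedComponentIn
  have hU's : U' ⊆ U := connectedComponentIn_subset U z
  have hzU' : z ∈ U' := mem_connectedComponentIn hz
  have hc0 : 0 ≤ c := (hω.nonneg z hz.1).trans hz.2.le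
  by_contra! hcon
  set v : ℂ → ℝ := fun x => if x ∈ U' then c else omegaC A D x with hv
  have hvω : ∀ x ∈ D, omegaC A D x ≤ v x := by
    intro x _
    simp only [hv]
    split_ifs with hxU
    · exact (hU's hxU).2.le
    · exact le_rfl
  have hvmax : ∀ x, v x ≤ max (omegaC A D x) c := by
    intro x
    simp only [hv]
    split_ifs
    · exact le_max_right _ _
    · exact le_max_left _ _
  have hnotU : ∀ x ∈ D, x ∉ U' → x ∈ closure U' → c ≤ omegaC A D x := by
    intro x hx hxU' hxc
    by_contra! hlt
    have hxU : x ∈ U := ⟨hx, hlt⟩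
    have hCo : IsOpen (connectedComponentIn U x) := hUo.connectedComponentIn
    obtain ⟨y, hy1, hy2⟩ := mem_closure_iff.1 hxc _ hCo (mem_connectedComponentIn hxU)
    have h1 := connectedComponentIn_eq hy1
    have h2 := connectedComponentIn_eq hy2
    exact hxU' (by rw [hU', h2, ← h1]; exact mem_connectedComponentIn hxU)
  have husc : UpperSemicontinuousOn v D := by
    intro x hx d hd
    rw [h.isOpen.nhdsWithin_eq hx]
    by_cases hxU : x ∈ U'
    · simp only [hv, if_pos hxU] at hd
      filter_upwards [hU'o.mem_nhds hxU] with y hy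
      simpa only [hv, if_pos hy] using hd
    · simp only [hv, if_neg hxU] at hd
      have hev := hω.usc x hx d hd
      rw [h.isOpen.nhdsWithin_eq hx] at hev
      by_cases hxc : x ∈ closure U'
      · have := hnotU x hx hxU hxc
        filter_upwards [hev] with y hy
        exact (hvmax y).trans_lt (max_lt hy (this.trans_lt hd))
      · filter_upwards [hev, isClosed_closure.isOpen_compl.mem_nhds hxc] with y hy hy2
        have : y ∉ U' := fun hyU => hy2 (_root_.subset_closure hyU)
        simpa only [hv, if_neg this] using hy
  have hv0 : ∀ x ∈ D, 0 ≤ v x := fun x hx => (hω.nonneg x hx).trans (hvω x hx)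
  have hv1 : ∀ x ∈ D, v x ≤ 1 := fun x hx => (hvmax x).trans (max_le (hω.le_one x hx) hc1)
  have hvs : IsUnitSubharmonic v D := by
    refine ⟨husc, hv0, hv1, fun x hx => ?_⟩
    by_cases hxU : x ∈ U'
    · filter_upwards [hU'o.eventually_closedBall_subset hxU, self_mem_nhdsWithin] with r hr hr0
      have hr0 : 0 < r := hr0
      have hcongr : Real.circleAverage v x r = Real.circleAverage (fun _ => c) x r := by
        refine Real.circleAverage_congr_sphere fun y hy => ?_
        rw [abs_of_pos hr0] at hy
        simp only [hv, if_pos (hr (sphere_subset_closedBall hy))]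
      rw [hcongr, Real.circleAverage_const]
      simp only [hv, if_pos hxU, le_refl]
    · filter_upwards [hω.mean x hx, h.isOpen.eventually_closedBall_subset hx,
        self_mem_nhdsWithin] with r hr hrD hr0
      have hr0 : 0 < r := hr0
      have hs : sphere x |r| ⊆ D := by
        rw [abs_of_pos hr0]; exact sphere_subset_closedBall.trans hrD
      simp only [hv, if_neg hxU]
      exact hr.trans (Real.circleAverage_mono (hω.circleIntegrable hs)
        (husc.circleIntegrable_of_bounds hv0 hv1 hs) fun y hy => hvω y (hs hy))
  have hvA : VanishesAt v D A := by
    intro a ha ε hε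
    filter_upwards [h.vanishesAt_omegaC a ha ε hε,
      mem_nhdsWithin_of_mem_nhds (isClosed_closure.isOpen_compl.mem_nhds (hcon a ha))] with x hx hx2
    have : x ∉ U' := fun hxU => hx2 (_root_.subset_closure hxU)
    simpa only [hv, if_neg this] using hx
  have hle := hvs.le_omegaC h.isOpen h.subset_closure hvA hz.1
  simp only [hv, if_pos hzU'] at hle
  exact absurd hz.2 (not_lt.2 hle)

/-- A holomorphic function on a sublevel set of `omegaC` that vanishes on `A` is zero. -/
theorem eq_zero_of_vanishes (h : GoodPair D A) {c : ℝ} (hc0 : 0 < c) (hc1 : c ≤ 1) {d : ℂ → ℂ}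
    (hd : DifferentiableOn ℂ d {z ∈ D | omegaC A D z < c})
    (hdA : ∀ a ∈ A, ∀ ε > 0, ∀ᶠ z in 𝓝[{z ∈ D | omegaC A D z < c}] a, ‖d z‖ ≤ ε) {z : ℂ}
    (hz : z ∈ D) (hzc : omegaC A D z < c) : d z = 0 := by
  have hzU : z ∈ {z ∈ D | omegaC A D z < c} := ⟨hz, hzc⟩
  obtain ⟨a, ha, haU'⟩ := h.exists_mem_closure_component hc1 hzU
  set U := {z ∈ D | omegaC A D z < c} with hU
  set U' := connectedComponentIn U z with hU'
  have hUo : IsOpen U := h.isOpen_omegaC_lt c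
  have hU'o : IsOpen U' := hUo.connectedComponentIn
  have hU's : U' ⊆ U := connectedComponentIn_subset U z
  have hclosed : ∀ x ∈ U, x ∈ closure U' → x ∈ U' := by
    intro x hxU hxc
    have hCo : IsOpen (connectedComponentIn U x) := hUo.connectedComponentIn
    obtain ⟨y, hy1, hy2⟩ := mem_closure_iff.1 hxc _ hCo (mem_connectedComponentIn hxU)
    have h1 := connectedComponentIn_eq hy1
    have h2 := connectedComponentIn_eq hy2
    rw [hU', h2, ← h1]; exact mem_connectedComponentIn hxU
  obtain ⟨γ, hγ, hγD, rfl, hγT⟩ := h.path a ha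
  obtain ⟨R₁, hR₁, hRA⟩ := h.nhds _ ha
  obtain ⟨R₂, hR₂, hRU⟩ := Metric.mem_nhdsWithin_iff.1
    (h.vanishesAt_omegaC _ ha (c / 2) (by positivity))
  obtain ⟨R₃, hR₃, hRd⟩ := Metric.mem_nhdsWithin_iff.1 (hdA _ ha 1 one_pos)
  set R := min R₁ (min R₂ R₃) with hR
  have hR0 : 0 < R := lt_min hR₁ (lt_min hR₂ hR₃)
  obtain ⟨r, hr, hle⟩ := IsUnitSubharmonic.exists_le_of_path hγ hγT hR0 (one_half_pos (α := ℝ))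
  set V := U' ∩ ball (γ 0) R with hV
  have hVo : IsOpen V := hU'o.inter isOpen_ball
  have hVd1 : ∀ x ∈ V, ‖d x‖ ≤ 1 := fun x hx =>
    hRd ⟨ball_subset_ball ((min_le_right _ _).trans (min_le_right _ _)) hx.2, hU's hx.1⟩
  have hfr : ∀ x ∈ frontier V ∩ ball (γ 0) R, x ∈ A := by
    intro x hx
    rw [hV, frontier_inter_open_inter isOpen_ball, hU'o.frontier_eq] at hx
    obtain ⟨⟨hxc, hxU'⟩, hxR⟩ := hx
    have hxD : x ∉ D := by
      intro hxD
      refine hxU' (hclosed x ⟨hxD, ?_⟩ hxc)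
      have : omegaC A D x ≤ c / 2 :=
        hRU ⟨ball_subset_ball ((min_le_right _ _).trans (min_le_left _ _)) hxR, hxD⟩
      linarith
    refine hRA ⟨?_, ball_subset_ball (min_le_left _ _) hxR⟩
    rw [h.isOpen.frontier_eq]
    exact ⟨closure_mono (hU's.trans fun y hy => hy.1) hxc, hxD⟩
  have hsmall : ∀ N : ℝ, 0 < N → ∀ x ∈ V ∩ ball (γ 0) r, ‖d x‖ ≤ Real.exp (-(N * (1 / 2))) := by
    intro N hN x hx
    have hsub := isUnitSubharmonic_log_max hVo
      (hd.mono (inter_subset_left.trans hU's)) one_pos hN hVd1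
    have := norm_le_of_log_max_le one_pos hN (hle V _ hVo inter_subset_right
      (fun t ht => hγD t (hU's ht.1).1) hsub (fun y hy ε hε => ?_) x hx)
    · norm_num at this ⊢
      exact this
    · have h1 := (hdA y (hfr y hy) (ε * N * (1 * Real.exp (-N))) (by positivity)).filter_mono
        (nhdsWithin_mono y (inter_subset_left.trans hU's : V ⊆ U))
      filter_upwards [h1] with w hw
      refine log_max_sub_div_le one_pos hN hε (hw.trans ?_)
      have : 0 < Real.exp (-N) := Real.exp_pos _
      linarith
  have hzero : ∀ x ∈ V ∩ ball (γ 0) r, d x = 0 := by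
    intro x hx
    rw [← norm_le_zero_iff]
    have hlim : Tendsto (fun N : ℝ => Real.exp (-(N * (1 / 2)))) atTop (𝓝 0) := by
      refine Real.tendsto_exp_neg_atTop_nhds_zero.comp ?_
      exact tendsto_id.atTop_mul_const (by norm_num)
    exact ge_of_tendsto hlim ((eventually_gt_atTop 0).mono fun N hN => hsmall N hN x hx)
  obtain ⟨y, hyB, hyU'⟩ := mem_closure_iff.1 haU' (ball (γ 0) R ∩ ball (γ 0) r)
    (isOpen_ball.inter isOpen_ball) ⟨mem_ball_self hR0, mem_ball_self hr⟩
  have hev : d =ᶠ[𝓝 y] 0 := by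
    filter_upwards [(hVo.inter isOpen_ball).mem_nhds ⟨⟨hyU', hyB.1⟩, hyB.2⟩] with x hx
    exact hzero x hx
  have han : AnalyticOnNhd ℂ d U' := (hd.mono hU's).analyticOnNhd hU'o
  exact han.eqOn_zero_of_preconnected_of_eventuallyEq_zero isPreconnected_connectedComponentIn
    hyU' hev (mem_connectedComponentIn hzU)

end GoodPair

/-- The complement in `X` of a closed neighbourhood of the part of the boundary outside `A`. -/
def trim (D A : Set ℂ) (j : ℕ) (X : Set ℂ) : Set ℂ :=
  X ∩ (cthickening (1 / ((j : ℝ) + 1)) (frontier D \ A))ᶜ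

theorem GoodPair.omegaC_mono {D₁ A₁ D₂ A₂ : Set ℂ} (h₁ : GoodPair D₁ A₁) (h₂ : GoodPair D₂ A₂)
    (hD : D₁ ⊆ D₂) (hA : A₁ ⊆ A₂) {z : ℂ} (hz : z ∈ D₁) : omegaC A₂ D₂ z ≤ omegaC A₁ D₁ z :=
  (h₂.omegaC_isUnitSubharmonic.mono hD).le_omegaC h₁.isOpen h₁.subset_closure
    (fun a ha ε hε => (h₂.vanishesAt_omegaC a (hA ha) ε hε).filter_mono (nhdsWithin_mono _ hD)) hz

section trim
variable {D A X : Set ℂ} {j : ℕ}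

theorem one_div_add_one_pos (j : ℕ) : (0 : ℝ) < 1 / (j + 1) := by positivity

theorem trim_subset : trim D A j X ⊆ X := inter_subset_left

theorem isOpen_trimSet (D A : Set ℂ) (j : ℕ) :
    IsOpen (cthickening (1 / ((j : ℝ) + 1)) (frontier D \ A))ᶜ :=
  isClosed_cthickening.isOpen_compl

theorem trim_mono {i : ℕ} (h : i ≤ j) : trim D A i X ⊆ trim D A j X := by
  refine inter_subset_inter_right _ (compl_subset_compl.2 (cthickening_mono ?_ _))
  exact one_div_le_one_div_of_le (by positivity) (by exact_mod_cast Nat.succ_le_succ h)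

theorem trim_frontier_subset : trim D A j (frontier D) ⊆ A := by
  rintro x ⟨hx, hx'⟩
  by_contra hxA
  exact hx' (self_subset_cthickening _ ⟨hx, hxA⟩)

theorem nhdsWithin_trim {x : ℂ} {Y : Set ℂ} (hx : x ∈ trim D A j Y) : 𝓝[trim D A j X] x = 𝓝[X] x :=
  nhdsWithin_inter_of_mem' (mem_nhdsWithin_of_mem_nhds ((isOpen_trimSet D A j).mem_nhds hx.2))

namespace GoodPair

theorem isClosed_frontier_diff (h : GoodPair D A) : IsClosed (frontier D \ A) := by
  refine isClosed_of_closure_subset fun x hx => ?_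
  have hxf : x ∈ frontier D :=
    closure_minimal sdiff_subset isClosed_frontier hx
  refine ⟨hxf, fun hxA => ?_⟩
  obtain ⟨r, hr, hrA⟩ := h.nhds x hxA
  obtain ⟨y, hy1, hy2⟩ := mem_closure_iff.1 hx _ isOpen_ball (mem_ball_self hr)
  exact hy2.2 (hrA ⟨hy2.1, hy1⟩)

theorem trim (h : GoodPair D A) (j : ℕ) : GoodPair (trim D A j D) (trim D A j (frontier D)) where
  isOpen := h.isOpen.inter (isOpen_trimSet D A j)
  isBounded := h.isBounded.subset trim_subset
  subset := by
    rw [_root_.trim, _root_.trim, ← frontier_inter_open_inter (isOpen_trimSet D A j)]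
    exact inter_subset_left
  nhds := by
    intro a ha
    obtain ⟨r, hr, hrs⟩ := Metric.isOpen_iff.1 (isOpen_trimSet D A j) a ha.2
    refine ⟨r, hr, ?_⟩
    rw [_root_.trim, _root_.trim, ← frontier_inter_open_inter (isOpen_trimSet D A j)]
    exact inter_subset_inter_right _ hrs
  path := by
    intro a ha
    obtain ⟨γ, h1, h2, h3⟩ := h.path a (trim_frontier_subset ha)
    exact ⟨γ, h1, fun t ht => h2 t (trim_subset ht), h3⟩

theorem exists_subset_trim (h : GoodPair D A) {K : Set ℂ} (hK : IsCompact K)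
    (hKD : K ⊆ D ∪ A) : ∃ J : ℕ, ∀ j ≥ J, K ⊆ (cthickening (1 / ((j : ℝ) + 1)) (frontier D \ A))ᶜ := by
  have hdisj : Disjoint K (frontier D \ A) := by
    rw [Set.disjoint_left]
    rintro x hx ⟨hxf, hxA⟩
    rcases hKD hx with hxD | hxA'
    · rw [h.isOpen.frontier_eq] at hxf
      exact hxf.2 hxD
    · exact hxA hxA'
  obtain ⟨δ, hδ, hd⟩ := hdisj.exists_cthickenings hK h.isClosed_frontier_diff
  obtain ⟨J, hJ⟩ := exists_nat_gt (1 / δ)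
  refine ⟨J, fun j hj x hx hx' => ?_⟩
  refine Set.disjoint_left.1 hd (self_subset_cthickening _ hx) (cthickening_mono ?_ _ hx')
  have h1 : (J : ℝ) ≤ j := by exact_mod_cast hj
  rw [div_lt_iff₀ hδ] at hJ
  rw [div_le_iff₀ (by positivity)]
  nlinarith

theorem exists_mem_trim (h : GoodPair D A) {x : ℂ} (hx : x ∈ D ∪ A) :
    ∃ J : ℕ, ∀ j ≥ J, x ∈ (cthickening (1 / ((j : ℝ) + 1)) (frontier D \ A))ᶜ := by
  obtain ⟨J, hJ⟩ := h.exists_subset_trim (isCompact_singleton (x := x)) (by simpa using hx)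
  exact ⟨J, fun j hj => hJ j hj rfl⟩

/-- The extremal functions of the trimmed pairs decrease to the extremal function. -/
theorem exists_omegaC_trim_lt (h : GoodPair D A) {z : ℂ} (hz : z ∈ D) {c : ℝ}
    (hc : omegaC A D z < c) : ∃ J : ℕ, ∀ j ≥ J, z ∈ _root_.trim D A j D ∧
      omegaC (_root_.trim D A j (frontier D)) (_root_.trim D A j D) z < c := by
  classical
  set Dj : ℕ → Set ℂ := fun j => _root_.trim D A j D with hDj
  set Aj : ℕ → Set ℂ := fun j => _root_.trim D A j (frontier D) with hAj
  have hg : ∀ j, GoodPair (Dj j) (Aj j) := fun j => h.trim j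
  set w : ℕ → ℂ → ℝ := fun j z => if z ∈ Dj j then omegaC (Aj j) (Dj j) z else 1 with hw
  have hw0 : ∀ j x, 0 ≤ w j x := by
    intro j x
    simp only [hw]
    split_ifs with hx
    · exact (hg j).omegaC_isUnitSubharmonic.nonneg x hx
    · exact zero_le_one
  have hw1 : ∀ j x, w j x ≤ 1 := by
    intro j x
    simp only [hw]
    split_ifs with hx
    · exact (hg j).omegaC_isUnitSubharmonic.le_one x hx
    · exact le_rfl
  have hanti : ∀ x, Antitone fun j => w j x := by
    intro x i j hij
    simp only [hw]
    by_cases hx : x ∈ Dj i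
    · have hx' : x ∈ Dj j := trim_mono hij hx
      rw [if_pos hx, if_pos hx']
      exact (hg i).omegaC_mono (hg j) (trim_mono hij) (trim_mono hij) hx
    · rw [if_neg hx]
      exact hw1 j x
  have hbdd : ∀ x, BddBelow (range fun j => w j x) := fun x => ⟨0, by
    rintro _ ⟨j, rfl⟩; exact hw0 j x⟩
  set W : ℂ → ℝ := fun x => ⨅ j, w j x with hW
  have hWle : ∀ j x, W x ≤ w j x := fun j x => ciInf_le (hbdd x) j
  have hlim : ∀ x, Tendsto (fun j => w j x) atTop (𝓝 (W x)) := fun x =>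
    tendsto_atTop_ciInf (hanti x) (hbdd x)
  have hW0 : ∀ x, 0 ≤ W x := fun x => le_ciInf fun j => hw0 j x
  have hW1 : ∀ x, W x ≤ 1 := fun x => (hWle 0 x).trans (hw1 0 x)
  have hwusc : ∀ j, UpperSemicontinuousOn (w j) D := by
    intro j x hx d hd
    by_cases hxj : x ∈ Dj j
    · have h1 : omegaC (Aj j) (Dj j) x < d := by simpa only [hw, if_pos hxj] using hd
      have h2 := (hg j).omegaC_isUnitSubharmonic.usc x hxj d h1
      rw [(hg j).isOpen.nhdsWithin_eq hxj] at h2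
      refine Filter.Eventually.filter_mono nhdsWithin_le_nhds ?_
      filter_upwards [h2, (hg j).isOpen.mem_nhds hxj] with y hy hyj
      simpa only [hw, if_pos hyj] using hy
    · have h1 : 1 < d := by simpa only [hw, if_neg hxj] using hd
      exact Eventually.of_forall fun y => (hw1 j y).trans_lt h1
  have hWusc : UpperSemicontinuousOn W D := by
    intro x hx d hd
    obtain ⟨j, hj⟩ := exists_lt_of_ciInf_lt hd
    exact (hwusc j x hx d hj).mono fun y hy => (hWle j y).trans_lt hy
  have hWs : IsUnitSubharmonic W D := by
    refine ⟨hWusc, fun x _ => hW0 x, fun x _ => hW1 x, fun x hx => ?_⟩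
    filter_upwards [h.isOpen.eventually_closedBall_subset hx, self_mem_nhdsWithin] with r hr hr0
    have hr0 : 0 < r := hr0
    have hs : sphere x |r| ⊆ D := by
      rw [abs_of_pos hr0]; exact sphere_subset_closedBall.trans hr
    obtain ⟨J, hJ⟩ := h.exists_subset_trim (isCompact_closedBall x r)
      (hr.trans subset_union_left)
    have hbj : ∀ j ≥ J, closedBall x r ⊆ Dj j := fun j hj y hy => ⟨hr hy, hJ j hj hy⟩
    refine ge_of_tendsto (tendsto_circleAverage (φ := w) (u := W) (c := x) (R := r)
      (fun n => (hwusc n).measurable_comp_circleMap hs)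
      (fun n y _ => by rw [abs_of_nonneg (hw0 n y)]; exact hw1 n y) fun y _ => hlim y) ?_
    filter_upwards [eventually_ge_atTop J] with j hj
    have hxj := hbj j hj (mem_closedBall_self hr0.le)
    have h1 := (hg j).omegaC_isUnitSubharmonic.le_circleAverage hr0 (hbj j hj)
    have h2 : Real.circleAverage (w j) x r =
        Real.circleAverage (omegaC (Aj j) (Dj j)) x r := by
      refine Real.circleAverage_congr_sphere fun y hy => ?_
      rw [abs_of_pos hr0] at hy
      simp only [hw, if_pos (hbj j hj (sphere_subset_closedBall hy))]
    rw [h2]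
    refine le_trans ?_ h1
    have := hWle j x
    simpa only [hw, if_pos hxj] using this
  have hWA : VanishesAt W D A := by
    intro a ha ε hε
    obtain ⟨J, hJ⟩ := h.exists_mem_trim (Or.inr ha)
    have haJ : a ∈ Aj J := ⟨h.subset ha, hJ J le_rfl⟩
    have h1 := (hg J).vanishesAt_omegaC a haJ ε hε
    have h3 : ∀ᶠ y in 𝓝[Dj J] a, W y ≤ ε := by
      filter_upwards [h1, self_mem_nhdsWithin] with y hy hyJ
      refine le_trans ?_ hy
      have := hWle J y
      simpa only [hw, if_pos hyJ] using this
    rwa [hDj, nhdsWithin_trim haJ] at h3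
  have hWz := (hWs.le_omegaC h.isOpen h.subset_closure hWA hz).trans_lt hc
  obtain ⟨i, hi⟩ := exists_lt_of_ciInf_lt hWz
  obtain ⟨J, hJ⟩ := h.exists_mem_trim (Or.inl hz)
  refine ⟨max i J, fun j hj => ?_⟩
  have hzj : z ∈ Dj j := ⟨hz, hJ j ((le_max_right _ _).trans hj)⟩
  refine ⟨hzj, ?_⟩
  have h1 := (hanti z ((le_max_left _ _).trans hj)).trans_lt hi
  simpa only [hw, if_pos hzj] using h1

end GoodPair

/-- A compact set between the trimmed domain and `D ∪ A`. -/
def trimCore (D A : Set ℂ) (j : ℕ) (X : Set ℂ) : Set ℂ :=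
  X ∩ (thickening (1 / ((j : ℝ) + 1)) (frontier D \ A))ᶜ

theorem trim_subset_trimCore {Y : Set ℂ} (h : X ⊆ Y) : trim D A j X ⊆ trimCore D A j Y :=
  inter_subset_inter h (compl_subset_compl.2 (thickening_subset_cthickening _ _))

theorem isCompact_trimCore (h : IsCompact X) : IsCompact (trimCore D A j X) :=
  h.inter_right isOpen_thickening.isClosed_compl

theorem trimCore_frontier_subset : trimCore D A j (frontier D) ⊆ A := by
  rintro x ⟨hx, hx'⟩
  by_contra hxA
  exact hx' (self_subset_thickening (one_div_add_one_pos j) _ ⟨hx, hxA⟩)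

theorem trimCore_closure_subset : trimCore D A j (closure D) ⊆ D ∪ A := by
  rintro x ⟨hx, hx'⟩
  rw [closure_eq_self_union_frontier] at hx
  exact hx.imp_right fun h => trimCore_frontier_subset ⟨h, hx'⟩

end trim

section Duality

variable {E X : Type*} [NormedAddCommGroup E] [NormedSpace ℂ E]
  [NormedAddCommGroup X] [NormedSpace ℂ X]

theorem norm_le_div_of_ball {Y : Type*} [NormedAddCommGroup Y] [NormedSpace ℂ Y] (T : Y → ℂ)
    (hT : ∀ (c : ℝ) (y : Y), 0 < c → ‖T ((c : ℂ) • y)‖ = c * ‖T y‖) {a : ℝ} (ha : 0 < a)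
    (h : ∀ y, ‖y‖ < a → ‖T y‖ ≤ 1) (y : Y) : ‖T y‖ ≤ ‖y‖ / a := by
  refine le_of_forall_pos_le_add fun ε hε => ?_
  set c : ℝ := 1 / (‖y‖ / a + ε) with hc
  have h0 : 0 < ‖y‖ / a + ε := by positivity
  have hc0 : 0 < c := by positivity
  have h1 : ‖(c : ℂ) • y‖ < a := by
    rw [norm_smul, Complex.norm_real, Real.norm_of_nonneg hc0.le, hc, one_div, inv_mul_lt_iff₀ h0,
      add_mul, div_mul_cancel₀ _ ha.ne']
    have : 0 < ε * a := by positivity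
    linarith
  have h2 := h _ h1
  rw [hT c y hc0, hc, one_div, inv_mul_le_iff₀ h0] at h2
  linarith

open scoped Pointwise in
theorem exists_norm_le_norm_sub_le (r : X →L[ℂ] E) (φ : E) {a b : ℝ} (ha : 0 < a) (hb : 0 < b)
    (h : ∀ l : E →L[ℂ] ℂ, (∀ e, ‖l e‖ ≤ ‖e‖ / a) → (∀ F, ‖l (r F)‖ ≤ ‖F‖ / b) → ‖l φ‖ < 1) :
    ∃ F, ‖F‖ ≤ b ∧ ‖φ - r F‖ ≤ a := by
  by_contra! hcon
  set C : Set E := r '' ball 0 b + ball 0 a with hC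
  have hconv : Convex ℝ C := by
    refine Convex.add ?_ (convex_ball _ _)
    exact (convex_ball (0 : X) b).is_linear_image (f := r)
      ⟨r.map_add, fun c x => r.map_smul_of_tower c x⟩
  have hφ : φ ∉ C := by
    rintro ⟨_, ⟨F, hF, rfl⟩, e, he, rfl⟩
    rw [mem_ball_zero_iff] at hF he
    have := hcon F hF.le
    simp only [add_sub_cancel_left] at this
    linarith
  obtain ⟨l, hl⟩ := RCLike.geometric_hahn_banach_open_point (𝕜 := ℂ) hconv
    (isOpen_ball.add_left) hφ
  have hl0 : ∀ F : X, ‖F‖ < b → ∀ e : E, ‖e‖ < a → (l (r F + e)).re < (l φ).re := fun F hF e he =>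
    hl _ ⟨_, ⟨F, mem_ball_zero_iff.2 hF, rfl⟩, e, mem_ball_zero_iff.2 he, rfl⟩
  set t : ℝ := (l φ).re with ht
  have ht0 : 0 < t := by
    have := hl0 0 (by simpa) 0 (by simpa)
    simpa using this
  have hbal : ∀ F : X, ‖F‖ < b → ∀ e : E, ‖e‖ < a → ‖l (r F + e)‖ ≤ t := by
    intro F hF e he
    obtain ⟨c, hc, hc'⟩ := RCLike.exists_norm_eq_mul_self (l (r F + e))
    have := hl0 (c • F) (by simpa [norm_smul, hc]) (c • e) (by simpa [norm_smul, hc])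
    rw [map_smul, ← smul_add, map_smul, smul_eq_mul, ← hc'] at this
    simpa using this.le
  have hsc : ∀ z : ℂ, ‖((t⁻¹ : ℝ) : ℂ) * z‖ = ‖z‖ / t := fun z => by
    rw [norm_mul, Complex.norm_real, Real.norm_of_nonneg (by positivity)]; field_simp
  have key := h (((t⁻¹ : ℝ) : ℂ) • l) ?_ ?_
  · rw [_root_.smul_apply, smul_eq_mul, hsc, div_lt_one ht0] at key
    exact (lt_irrefl _) (key.trans_le (ht ▸ re_le_norm _))
  · refine norm_le_div_of_ball (((t⁻¹ : ℝ) : ℂ) • l : E →L[ℂ] ℂ) (fun c y hc => ?_) ha fun e he => ?_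
    · rw [map_smul, norm_smul, Complex.norm_real, Real.norm_of_nonneg hc.le]
    · rw [_root_.smul_apply, smul_eq_mul, hsc, div_le_one ht0]
      simpa using hbal 0 (by simpa) e he
  · refine norm_le_div_of_ball (fun F => (((t⁻¹ : ℝ) : ℂ) • l : E →L[ℂ] ℂ) (r F))
      (fun c y hc => ?_) hb fun F hF => ?_
    · rw [map_smul, map_smul, norm_smul, Complex.norm_real, Real.norm_of_nonneg hc.le]
    · rw [_root_.smul_apply, smul_eq_mul, hsc, div_le_one ht0]
      simpa using hbal F hF 0 (by simpa)

theorem exists_functional_near (r : X →L[ℂ] E) (T : X →ₗ[ℂ] ℂ) {α β : ℝ} (hα : 0 < α) (hβ : 0 < β)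
    (h : ∀ F, ‖T F‖ ≤ max (α * ‖r F‖) (β * ‖F‖)) :
    ∃ L : E →L[ℂ] ℂ, (∀ e, ‖L e‖ ≤ α * ‖e‖) ∧ ∀ F, ‖L (r F) - T F‖ ≤ β * ‖F‖ := by
  let J : X →ₗ[ℂ] E × X := ((α : ℂ) • (r : X →ₗ[ℂ] E)).prod ((β : ℂ) • LinearMap.id)
  have hJ : ∀ F, J F = ((α : ℂ) • r F, (β : ℂ) • F) := fun F => rfl
  have hJn : ∀ F, ‖J F‖ = max (α * ‖r F‖) (β * ‖F‖) := fun F => by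
    rw [hJ, Prod.norm_mk, norm_smul, norm_smul, Complex.norm_real, Complex.norm_real,
      Real.norm_of_nonneg hα.le, Real.norm_of_nonneg hβ.le]
  have hinj : Function.Injective J := fun F F' hFF => by
    have := congrArg Prod.snd hFF
    simp only [hJ] at this
    exact smul_right_injective X (Complex.ofReal_ne_zero.2 hβ.ne') this
  let e := LinearEquiv.ofInjective J hinj
  let S : LinearMap.range J →L[ℂ] ℂ := LinearMap.mkContinuous (T ∘ₗ e.symm.toLinearMap) 1 (by
    intro y
    obtain ⟨F, rfl⟩ := e.surjective y
    have h1 : ‖e F‖ = ‖J F‖ := rfl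
    simpa [h1, hJn] using h F)
  obtain ⟨g, hg, hgn⟩ := exists_extension_norm_eq (LinearMap.range J) S
  have hg1 : ‖g‖ ≤ 1 := hgn ▸ LinearMap.mkContinuous_norm_le _ zero_le_one _
  have hgJ : ∀ F, g (J F) = T F := fun F => by
    have := hg (e F)
    have h2 : S (e F) = T F := by
      simp [S]
    rw [h2] at this
    exact this
  have hgle : ∀ p, ‖g p‖ ≤ ‖p‖ := fun p => by
    simpa using (g.le_of_opNorm_le hg1 p)
  refine ⟨(α : ℂ) • g.comp (ContinuousLinearMap.inl ℂ E X), fun x => ?_, fun F => ?_⟩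
  · have := hgle (x, 0)
    simp only [_root_.smul_apply, ContinuousLinearMap.comp_apply,
      ContinuousLinearMap.inl_apply, smul_eq_mul, norm_mul, Complex.norm_real,
      Real.norm_of_nonneg hα.le]
    gcongr
    simpa using this
  · have h1 : ((α : ℂ) • g.comp (ContinuousLinearMap.inl ℂ E X)) (r F) - T F
        = - g (0, (β : ℂ) • F) := by
      rw [← hgJ F, hJ]
      have : ((α : ℂ) • r F, (β : ℂ) • F) = (α : ℂ) • ((r F, 0) : E × X) + (0, (β : ℂ) • F) := by
        simp
      rw [this, map_add, map_smul]
      simp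
    rw [h1, norm_neg]
    refine (hgle _).trans ?_
    rw [Prod.norm_mk, norm_smul, norm_zero, Complex.norm_real, Real.norm_of_nonneg hβ.le,
      max_eq_right (by positivity)]

end Duality

theorem norm_sub_le_of_differentiableOn_ball {h : ℂ → ℂ} {c z : ℂ} {R C : ℝ}
    (hd : DifferentiableOn ℂ h (ball c R)) (hC : ∀ x ∈ ball c R, ‖h x‖ ≤ C) (hz : z ∈ ball c R) :
    ‖h z - h c‖ ≤ 2 * C / R * ‖z - c‖ := by
  have hc : c ∈ ball c R := mem_ball_self (pos_of_mem_ball hz)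
  simpa [dist_eq_norm] using dist_le_div_mul_dist_of_mapsTo_ball (R₂ := 2 * C) hd (fun x hx => by
    rw [mem_closedBall, dist_eq_norm]
    linarith [norm_sub_le (h x) (h c), hC x hx, hC c hc]) hz

theorem norm_deriv_le_of_differentiableOn_ball {h : ℂ → ℂ} {c : ℂ} {R C : ℝ} (hR : 0 < R)
    (hd : DifferentiableOn ℂ h (ball c R)) (hC : ∀ x ∈ ball c R, ‖h x‖ ≤ C) :
    ‖deriv h c‖ ≤ 2 * C / R := by
  have hc : c ∈ ball c R := mem_ball_self hR
  refine norm_deriv_le_div_of_mapsTo_ball hd (fun x hx => ?_) hR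
  rw [mem_closedBall, dist_eq_norm]
  linarith [norm_sub_le (h x) (h c), hC x hx, hC c hc]

theorem continuousAt_partial_deriv {g : ℂ → ℂ → ℂ} {z₀ w₀ : ℂ} {ρ : ℝ} (hρ : 0 < ρ)
    (h₁ : ∀ w ∈ ball w₀ (3 * ρ), DifferentiableOn ℂ (fun z => g z w) (ball z₀ (3 * ρ)))
    (h₂ : ∀ z ∈ ball z₀ (3 * ρ), DifferentiableOn ℂ (g z) (ball w₀ (3 * ρ))) {C : ℝ}
    (hC : ∀ z ∈ ball z₀ (3 * ρ), ∀ w ∈ ball w₀ (3 * ρ), ‖g z w‖ ≤ C) :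
    ContinuousAt (fun p : ℂ × ℂ => deriv (fun z => g z p.2) p.1) (z₀, w₀) := by
  have key : ∀ z ∈ ball z₀ ρ, ∀ w ∈ ball w₀ ρ,
      ‖deriv (fun z => g z w) z - deriv (fun z => g z w₀) z₀‖ ≤
        2 * (2 * C / ρ) / (2 * ρ) * ‖z - z₀‖ + 2 * (2 * C / (3 * ρ) * ‖w - w₀‖) / ρ := by
    intro z hz w hw
    have hw3 : w ∈ ball w₀ (3 * ρ) := ball_subset_ball (by linarith) hw
    have hw0 : w₀ ∈ ball w₀ (3 * ρ) := mem_ball_self (by linarith)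
    have hz0 : z₀ ∈ ball z₀ (3 * ρ) := mem_ball_self (by linarith)
    have h1 : ‖deriv (fun z => g z w) z - deriv (fun z => g z w) z₀‖ ≤
        2 * (2 * C / ρ) / (2 * ρ) * ‖z - z₀‖ := by
      refine norm_sub_le_of_differentiableOn_ball
        (((h₁ w hw3).deriv isOpen_ball).mono (ball_subset_ball (by linarith))) (fun x hx => ?_)
        (ball_subset_ball (by linarith) hz)
      have hsub : ball x ρ ⊆ ball z₀ (3 * ρ) :=
        ball_subset_ball' (by rw [mem_ball] at hx; linarith)
      exact norm_deriv_le_of_differentiableOn_ball hρ ((h₁ w hw3).mono hsub)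
        fun y hy => hC y (hsub hy) w hw3
    have h2 : ‖deriv (fun z => g z w) z₀ - deriv (fun z => g z w₀) z₀‖ ≤
        2 * (2 * C / (3 * ρ) * ‖w - w₀‖) / ρ := by
      have hsub : ball z₀ ρ ⊆ ball z₀ (3 * ρ) := ball_subset_ball (by linarith)
      have hnhds := isOpen_ball.mem_nhds hz0
      rw [← deriv_fun_sub ((h₁ w hw3).differentiableAt hnhds)
        ((h₁ w₀ hw0).differentiableAt hnhds)]
      refine norm_deriv_le_of_differentiableOn_ball hρ
        (((h₁ w hw3).sub (h₁ w₀ hw0)).mono hsub) fun y hy => ?_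
      exact norm_sub_le_of_differentiableOn_ball (h₂ y (hsub hy)) (hC y (hsub hy)) hw3
    calc _ = ‖(deriv (fun z => g z w) z - deriv (fun z => g z w) z₀) +
          (deriv (fun z => g z w) z₀ - deriv (fun z => g z w₀) z₀)‖ := by congr 1; ring
      _ ≤ _ := (norm_add_le _ _).trans (add_le_add h1 h2)
  rw [ContinuousAt, tendsto_iff_norm_sub_tendsto_zero]
  have hlim : Tendsto (fun p : ℂ × ℂ => 2 * (2 * C / ρ) / (2 * ρ) * ‖p.1 - z₀‖ +
      2 * (2 * C / (3 * ρ) * ‖p.2 - w₀‖) / ρ) (𝓝 (z₀, w₀)) (𝓝 0) := by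
    have : Continuous (fun p : ℂ × ℂ => 2 * (2 * C / ρ) / (2 * ρ) * ‖p.1 - z₀‖ +
      2 * (2 * C / (3 * ρ) * ‖p.2 - w₀‖) / ρ) := by fun_prop
    simpa using this.tendsto (z₀, w₀)
  refine squeeze_zero' (Eventually.of_forall fun _ => norm_nonneg _) ?_ hlim
  filter_upwards [prod_mem_nhds (ball_mem_nhds z₀ hρ) (ball_mem_nhds w₀ hρ)] with p hp
  exact key p.1 hp.1 p.2 hp.2

/-- **Osgood's lemma** for bounded functions of two variables. -/
theorem differentiableAt_of_separately {g : ℂ → ℂ → ℂ} {U V : Set ℂ} (hU : IsOpen U) (hV : IsOpen V)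
    (h₁ : ∀ w ∈ V, DifferentiableOn ℂ (fun z => g z w) U)
    (h₂ : ∀ z ∈ U, DifferentiableOn ℂ (g z) V) {C : ℝ}
    (hC : ∀ z ∈ U, ∀ w ∈ V, ‖g z w‖ ≤ C) {p : ℂ × ℂ} (hp : p ∈ U ×ˢ V) :
    DifferentiableAt ℂ (fun p : ℂ × ℂ => g p.1 p.2) p := by
  obtain ⟨z₀, w₀⟩ := p
  obtain ⟨r, hr, hrU⟩ := Metric.isOpen_iff.1 hU z₀ hp.1
  obtain ⟨s, hs, hsV⟩ := Metric.isOpen_iff.1 hV w₀ hp.2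
  set ρ := min r s / 3 with hρ
  have hρ0 : 0 < ρ := by positivity
  have hU' : ball z₀ (3 * ρ) ⊆ U := (ball_subset_ball (by
    rw [hρ]; linarith [min_le_left r s])).trans hrU
  have hV' : ball w₀ (3 * ρ) ⊆ V := (ball_subset_ball (by
    rw [hρ]; linarith [min_le_right r s])).trans hsV
  have hc₁ := continuousAt_partial_deriv hρ0 (fun w hw => (h₁ w (hV' hw)).mono hU')
    (fun z hz => (h₂ z (hU' hz)).mono hV') (fun z hz w hw => hC z (hU' hz) w (hV' hw))
  have hc₂ := continuousAt_partial_deriv (g := fun w z => g z w) hρ0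
    (fun z hz => (h₂ z (hU' hz)).mono hV')
    (fun w hw => (h₁ w (hV' hw)).mono hU')
     (fun w hw z hz => hC z (hU' hz) w (hV' hw))
  have hc₂' : ContinuousAt (fun p : ℂ × ℂ => deriv (fun w => g p.1 w) p.2) (z₀, w₀) :=
    ContinuousAt.comp (f := Prod.swap) (x := (z₀, w₀)) hc₂ continuous_swap.continuousAt
  have hspan : Continuous (fun c : ℂ => ContinuousLinearMap.toSpanSingleton ℂ c) :=
    (ContinuousLinearMap.toSpanSingletonLIE ℂ ℂ).continuous
  have hnhds : U ×ˢ V ∈ 𝓝 (z₀, w₀) := (hU.prod hV).mem_nhds hp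
  have := hasStrictFDerivAt_uncurry_coprod (𝕜 := ℂ) (u := (z₀, w₀)) (f := g)
    (f₁ := fun z w => ContinuousLinearMap.toSpanSingleton ℂ (deriv (fun z => g z w) z))
    (f₂ := fun z w => ContinuousLinearMap.toSpanSingleton ℂ (deriv (fun w => g z w) w))
    (by
      filter_upwards [hnhds] with v hv
      exact ((h₁ v.2 hv.2).differentiableAt (hU.mem_nhds hv.1)).hasDerivAt.hasFDerivAt)
    (by
      filter_upwards [hnhds] with v hv
      exact ((h₂ v.1 hv.1).differentiableAt (hV.mem_nhds hv.2)).hasDerivAt.hasFDerivAt)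
    (hspan.continuousAt.comp hc₁) (hspan.continuousAt.comp hc₂')
  exact this.hasFDerivAt.differentiableAt

theorem norm_le_max_two_constants {D A : Set ℂ} (hD : IsOpen D) (hA : A ⊆ closure D) {F : ℂ → ℂ}
    (hF : DifferentiableOn ℂ F D) {N ρ s : ℝ} (hs : 0 ≤ s) (hρ : 0 ≤ ρ) (hFN : ∀ z ∈ D, ‖F z‖ ≤ N)
    (hρN : ρ ≤ N) (hFA : ∀ a ∈ A, ∀ ε > 0, ∀ᶠ z in 𝓝[D] a, ‖F z‖ ≤ ρ + ε) {z : ℂ} (hz : z ∈ D) :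
    ‖F z‖ ≤ max (Real.exp (s * omegaC A D z) * ρ) (Real.exp (-(s * (1 - omegaC A D z))) * N) := by
  have hω0 := omegaC_nonneg hD hA hz
  rcases (hρ.trans hρN).eq_or_lt with hN | hN
  · refine le_max_of_le_right ?_
    rw [← hN, mul_zero]
    exact (hFN z hz).trans hN.symm.le
  by_cases h1 : ρ ≤ N * Real.exp (-s)
  · rcases hs.eq_or_lt with rfl | hs
    · refine le_max_of_le_right ?_
      simpa using hFN z hz
    · refine le_max_of_le_right ?_
      rw [mul_comm]
      refine norm_le_two_constants hD hA hF hN hs hFN (fun a ha ε hε => ?_) hz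
      filter_upwards [hFA a ha ε hε] with x hx
      linarith
  · rw [not_le] at h1
    have hρ0 : 0 < ρ := lt_trans (by positivity) h1
    refine le_max_of_le_left ?_
    rcases hρN.eq_or_lt with rfl | hρN
    · have : 1 ≤ Real.exp (s * omegaC A D z) := Real.one_le_exp (by positivity)
      nlinarith [hFN z hz]
    · set s₀ := Real.log (N / ρ) with hs₀
      have hs₀pos : 0 < s₀ := Real.log_pos (by rwa [one_lt_div hρ0])
      have he : Real.exp (-s₀) = ρ / N := by
        rw [Real.exp_neg, hs₀, Real.exp_log (by positivity), inv_div]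
      have hs₀s : s₀ ≤ s := by
        have : Real.exp (-s) ≤ Real.exp (-s₀) := by
          rw [he, le_div_iff₀ hN]
          linarith
        linarith [Real.exp_le_exp.1 this]
      have hNe : N * Real.exp (-s₀) = ρ := by rw [he]; field_simp
      have := norm_le_two_constants hD hA hF hN hs₀pos hFN (by rwa [hNe]) hz
      have h2 : N * Real.exp (-(s₀ * (1 - omegaC A D z))) = ρ * Real.exp (s₀ * omegaC A D z) := by
        rw [← hNe, mul_assoc, ← Real.exp_add]
        congr 2
        ring
      rw [h2, mul_comm] at this
      exact this.trans (by gcongr)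

/-- A pair of good pairs `(D, A)` and `(G, B)`, a restriction map `r` from a normed space `X` of
holomorphic functions on `D` to a normed space `E` of boundary values on `A`, and a bounded
holomorphic map `Φ : G → E` whose boundary values on `B` lie in the range of `r`. -/
structure CrossData {E X : Type*} [NormedAddCommGroup E] [NormedSpace ℂ E]
    [NormedAddCommGroup X] [NormedSpace ℂ X] (D A G B : Set ℂ) (r : X →L[ℂ] E)
    (ev : ℂ → X →ₗ[ℂ] ℂ) (Φ : ℂ → E) (M : ℝ) : Prop where
  left : GoodPair D A
  right : GoodPair G B
  norm_restrict : ∀ F, ‖r F‖ ≤ ‖F‖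
  differentiableOn_eval : ∀ F, DifferentiableOn ℂ (fun z => ev z F) D
  norm_eval : ∀ z ∈ D, ∀ F, ‖ev z F‖ ≤ ‖F‖
  eventually_norm_eval : ∀ F, ∀ a ∈ A, ∀ ε > 0, ∀ᶠ z in 𝓝[D] a, ‖ev z F‖ ≤ ‖r F‖ + ε
  pos : 0 < M
  differentiableOn : DifferentiableOn ℂ Φ G
  norm_le : ∀ w ∈ G, ‖Φ w‖ ≤ M
  tendsto : ∀ b ∈ B, ∃ F, ‖F‖ ≤ M ∧ Tendsto Φ (𝓝[G] b) (𝓝 (r F))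

namespace CrossData

variable {E X : Type*} [NormedAddCommGroup E] [NormedSpace ℂ E]
  [NormedAddCommGroup X] [NormedSpace ℂ X] {D A G B : Set ℂ} {r : X →L[ℂ] E}
  {ev : ℂ → X →ₗ[ℂ] ℂ} {Φ : ℂ → E} {M : ℝ}

theorem exists_approx (h : CrossData D A G B r ev Φ M) {s : ℝ} (hs : 0 ≤ s) {w : ℂ} (hw : w ∈ G) :
    ∃ F, ‖F‖ ≤ 2 * M * Real.exp (s * omegaC B G w) ∧
      ‖Φ w - r F‖ ≤ 2 * M * Real.exp (-(s * (1 - omegaC B G w))) := by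
  have hM := h.pos
  rcases hs.eq_or_lt with rfl | hs
  · refine ⟨0, ?_, ?_⟩
    · simp only [norm_zero]; positivity
    · simp only [map_zero, sub_zero, zero_mul, neg_zero, Real.exp_zero]
      linarith [h.norm_le w hw]
  set a := 2 * M * Real.exp (-(s * (1 - omegaC B G w))) with ha
  have hba : 2 * M * Real.exp (s * omegaC B G w) = a * Real.exp s := by
    rw [ha, mul_assoc _ _ (Real.exp s), ← Real.exp_add]
    congr 2
    ring
  have ha0 : 0 < a := by positivity
  rw [hba]
  refine exists_norm_le_norm_sub_le r (Φ w) ha0 (by positivity) fun l hl hlr => ?_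
  have key := norm_le_two_constants h.right.isOpen h.right.subset_closure (F := fun w => l (Φ w))
    (M := M / a) (s := s) (l.differentiable.comp_differentiableOn h.differentiableOn)
    (by positivity) hs (fun w hw => (hl _).trans (by gcongr; exact h.norm_le w hw))
    (fun b hb ε hε => ?_) hw
  · refine key.trans_lt ?_
    have : M / a * Real.exp (-(s * (1 - omegaC B G w))) = 1 / 2 := by
      rw [ha]; field_simp
    rw [this]
    norm_num
  · obtain ⟨F, hF, hlim⟩ := h.tendsto b hb
    have h1 : Tendsto (fun w => ‖l (Φ w)‖) (𝓝[G] b) (𝓝 ‖l (r F)‖) :=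
      ((l.continuous.tendsto _).comp hlim).norm
    have h2 : ‖l (r F)‖ ≤ M / a * Real.exp (-s) := by
      refine (hlr F).trans ?_
      rw [Real.exp_neg, ← div_eq_mul_inv, div_div]
      gcongr
    filter_upwards [h1.eventually (gt_mem_nhds (lt_add_of_pos_right _ hε))] with x hx
    linarith

theorem exists_functional (h : CrossData D A G B r ev Φ M) {s : ℝ} (hs : 0 ≤ s) {z : ℂ}
    (hz : z ∈ D) :
    ∃ L : E →L[ℂ] ℂ, (∀ e, ‖L e‖ ≤ Real.exp (s * omegaC A D z) * ‖e‖) ∧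
      ∀ F, ‖L (r F) - ev z F‖ ≤ Real.exp (-(s * (1 - omegaC A D z))) * ‖F‖ :=
  exists_functional_near r (ev z) (by positivity) (by positivity) fun F =>
    norm_le_max_two_constants h.left.isOpen h.left.subset_closure (h.differentiableOn_eval F) hs
      (norm_nonneg _) (fun x hx => h.norm_eval x hx F) (h.norm_restrict F)
      (h.eventually_norm_eval F) hz

/-- Approximating functionals and functions which converge to the same limit `g z w`. -/
structure Approx (D A G B : Set ℂ) (r : X →L[ℂ] E) (ev : ℂ → X →ₗ[ℂ] ℂ) (Φ : ℂ → E) (M : ℝ)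
    (g : ℂ → ℂ → ℂ) (L : ℕ → ℂ → (E →L[ℂ] ℂ)) (F : ℕ → ℂ → X) : Prop where
  norm_L : ∀ n, ∀ z ∈ D, ∀ e, ‖L n z e‖ ≤ Real.exp (n * omegaC A D z) * ‖e‖
  norm_L_sub : ∀ n, ∀ z ∈ D, ∀ x,
    ‖L n z (r x) - ev z x‖ ≤ Real.exp (-(n * (1 - omegaC A D z))) * ‖x‖
  norm_F : ∀ n, ∀ w ∈ G, ‖F n w‖ ≤ 2 * M * Real.exp (n * omegaC B G w)
  norm_F_sub : ∀ n, ∀ w ∈ G, ‖Φ w - r (F n w)‖ ≤ 2 * M * Real.exp (-(n * (1 - omegaC B G w)))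
  norm_sub_le : ∀ q < 0, ∃ C, ∀ z ∈ D, ∀ w ∈ G, omegaC A D z + omegaC B G w ≤ 1 + q → ∀ n : ℕ,
    ‖L n z (Φ w) - g z w‖ ≤ C * Real.exp q ^ n ∧ ‖ev z (F n w) - g z w‖ ≤ C * Real.exp q ^ n

theorem exists_limit (h : CrossData D A G B r ev Φ M) :
    ∃ g L F, Approx D A G B r ev Φ M g L F := by
  have hM := h.pos
  choose! L hL₁ hL₂ using fun (n : ℕ) (z : ℂ) (hz : z ∈ D) =>
    h.exists_functional (s := n) n.cast_nonneg hz
  choose! F hF₁ hF₂ using fun (n : ℕ) (w : ℂ) (hw : w ∈ G) =>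
    h.exists_approx (s := n) n.cast_nonneg hw
  have key : ∀ q : ℝ, ∀ z ∈ D, ∀ w ∈ G, omegaC A D z + omegaC B G w ≤ 1 + q → q < 0 → ∀ n : ℕ,
      ‖L n z (Φ w) - ev z (F n w)‖ ≤ 4 * M * Real.exp q ^ n ∧
      ‖L (n + 1) z (Φ w) - ev z (F n w)‖ ≤ 8 * M * Real.exp q ^ n := by
    intro q z hz w hw hq hq0 n
    have hω0 := omegaC_nonneg h.left.isOpen h.left.subset_closure hz
    have hω1 := omegaC_le_one h.left.isOpen h.left.subset_closure hz
    have split : ∀ m : ℕ, ‖L m z (Φ w) - ev z (F n w)‖ ≤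
        Real.exp (m * omegaC A D z) * (2 * M * Real.exp (-(n * (1 - omegaC B G w)))) +
        Real.exp (-(m * (1 - omegaC A D z))) * (2 * M * Real.exp (n * omegaC B G w)) := by
      intro m
      calc _ = ‖L m z (Φ w - r (F n w)) + (L m z (r (F n w)) - ev z (F n w))‖ := by
            rw [map_sub]; congr 1; ring
        _ ≤ _ := norm_add_le_of_le
          ((hL₁ m z hz _).trans (by gcongr; exact hF₂ n w hw))
          ((hL₂ m z hz _).trans (by gcongr; exact hF₁ n w hw))
    have e1 : Real.exp (n * omegaC A D z) * (2 * M * Real.exp (-(n * (1 - omegaC B G w)))) ≤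
        2 * M * Real.exp q ^ n := by
      rw [mul_left_comm, ← Real.exp_add, ← Real.exp_nat_mul]
      gcongr
      have : (n : ℝ) * (omegaC A D z + omegaC B G w) ≤ n * (1 + q) := by gcongr
      linarith
    have e2 : Real.exp (-(n * (1 - omegaC A D z))) * (2 * M * Real.exp (n * omegaC B G w)) ≤
        2 * M * Real.exp q ^ n := by
      rw [mul_left_comm, ← Real.exp_add, ← Real.exp_nat_mul]
      gcongr
      have : (n : ℝ) * (omegaC A D z + omegaC B G w) ≤ n * (1 + q) := by gcongr
      linarith
    refine ⟨(split n).trans (by linarith), (split (n + 1)).trans ?_⟩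
    have f1 : Real.exp ((n + 1 : ℕ) * omegaC A D z) ≤ 3 * Real.exp (n * omegaC A D z) := by
      push_cast
      rw [add_mul, one_mul, Real.exp_add, mul_comm]
      gcongr
      exact (Real.exp_le_exp.2 hω1).trans (by linarith [Real.exp_one_lt_d9])
    have f2 : Real.exp (-((n + 1 : ℕ) * (1 - omegaC A D z))) ≤
        Real.exp (-(n * (1 - omegaC A D z))) := by
      gcongr
      simp
    have g1 := mul_le_mul_of_nonneg_right f1
      (show 0 ≤ 2 * M * Real.exp (-(n * (1 - omegaC B G w))) by positivity)
    have g2 := mul_le_mul_of_nonneg_right f2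
      (show 0 ≤ 2 * M * Real.exp (n * omegaC B G w) by positivity)
    nlinarith
  have step : ∀ q : ℝ, ∀ z ∈ D, ∀ w ∈ G, omegaC A D z + omegaC B G w ≤ 1 + q → q < 0 → ∀ n : ℕ,
      dist (L n z (Φ w)) (L (n + 1) z (Φ w)) ≤ 12 * M * Real.exp q ^ n := by
    intro q z hz w hw hq hq0 n
    obtain ⟨h1, h2⟩ := key q z hz w hw hq hq0 n
    rw [← dist_eq_norm] at h1 h2
    linarith [dist_triangle_right (L n z (Φ w)) (L (n + 1) z (Φ w)) (ev z (F n w))]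
  have hlim : ∀ z w : ℂ, ∃ g : ℂ, z ∈ D → w ∈ G → omegaC A D z + omegaC B G w < 1 →
      Tendsto (fun n => L n z (Φ w)) atTop (𝓝 g) := by
    intro z w
    by_cases hzw : z ∈ D ∧ w ∈ G ∧ omegaC A D z + omegaC B G w < 1
    · obtain ⟨hz, hw, hlt⟩ := hzw
      obtain ⟨g, hg⟩ := cauchySeq_tendsto_of_complete (cauchySeq_of_le_geometric _ _
        (Real.exp_lt_one_iff.2 (sub_neg.2 hlt))
        (step (omegaC A D z + omegaC B G w - 1) z hz w hw (by linarith) (by linarith)))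
      exact ⟨g, fun _ _ _ => hg⟩
    · exact ⟨0, fun hz hw hlt => absurd ⟨hz, hw, hlt⟩ hzw⟩
  choose g hg using hlim
  refine ⟨g, L, F, hL₁, hL₂, hF₁, hF₂, fun q hq0 =>
    ⟨12 * M / (1 - Real.exp q) + 4 * M, fun z hz w hw hq n => ?_⟩⟩
  have h1 := dist_le_of_le_geometric_of_tendsto _ _ (Real.exp_lt_one_iff.2 hq0)
    (step q z hz w hw hq hq0) (hg z w hz hw (by linarith)) n
  have h2 := (key q z hz w hw hq hq0 n).1
  have h3 : 12 * M * Real.exp q ^ n / (1 - Real.exp q) =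
    12 * M / (1 - Real.exp q) * Real.exp q ^ n := by ring
  have h4 : 0 ≤ 4 * M * Real.exp q ^ n := by positivity
  rw [h3] at h1
  rw [← dist_eq_norm] at h2
  rw [← dist_eq_norm, ← dist_eq_norm, add_mul]
  exact ⟨by linarith, by linarith [dist_triangle_left (ev z (F n w)) (g z w) (L n z (Φ w))]⟩

end CrossData

theorem tendsto_exp_neg_nat_mul {c : ℝ} (hc : 0 < c) :
    Tendsto (fun n : ℕ => Real.exp (-(n * c))) atTop (𝓝 0) := by
  have h := tendsto_pow_atTop_nhds_zero_of_lt_one (Real.exp_pos (-c)).le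
    (Real.exp_lt_one_iff.2 (neg_lt_zero.2 hc))
  refine h.congr fun n => ?_
  rw [← Real.exp_nat_mul]
  congr 1
  ring

theorem differentiableOn_of_norm_sub_le_pow {U : Set ℂ} (hU : IsOpen U) {u : ℕ → ℂ → ℂ} {g : ℂ → ℂ}
    (hu : ∀ n, DifferentiableOn ℂ (u n) U) {C ρ : ℝ} (hρ0 : 0 ≤ ρ) (hρ1 : ρ < 1)
    (h : ∀ n, ∀ x ∈ U, ‖u n x - g x‖ ≤ C * ρ ^ n) : DifferentiableOn ℂ g U := by
  have hlim : Tendsto (fun n : ℕ => C * ρ ^ n) atTop (𝓝 0) := by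
    simpa using (tendsto_pow_atTop_nhds_zero_of_lt_one hρ0 hρ1).const_mul C
  have : TendstoUniformlyOn u g atTop U := by
    rw [Metric.tendstoUniformlyOn_iff]
    intro ε hε
    filter_upwards [hlim.eventually (gt_mem_nhds hε)] with n hn x hx
    rw [dist_comm, dist_eq_norm]
    exact (h n x hx).trans_lt hn
  exact this.tendstoLocallyUniformlyOn.differentiableOn (Eventually.of_forall hu) hU

theorem tendsto_of_norm_sub_le_add {ι : Type*} {l : Filter ι} {u : ι → ℂ} {c : ℂ} {K : ℕ → ℝ}
    (hK : Tendsto K atTop (𝓝 0)) {R : ℕ → ι → ℝ} (hR : ∀ n, Tendsto (R n) l (𝓝 0))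
    (h : ∀ᶠ x in l, ∀ n, ‖u x - c‖ ≤ K n + R n x) : Tendsto u l (𝓝 c) := by
  rw [Metric.tendsto_nhds]
  intro ε hε
  obtain ⟨n, hn⟩ := (hK.eventually (gt_mem_nhds (half_pos hε))).exists
  filter_upwards [h, (hR n).eventually (gt_mem_nhds (half_pos hε))] with x hx hx'
  rw [dist_eq_norm]
  linarith [hx n]

namespace CrossData

variable {E X : Type*} [NormedAddCommGroup E] [NormedSpace ℂ E]
  [NormedAddCommGroup X] [NormedSpace ℂ X] {D A G B : Set ℂ} {r : X →L[ℂ] E}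
  {ev : ℂ → X →ₗ[ℂ] ℂ} {Φ : ℂ → E} {M : ℝ} {g : ℂ → ℂ → ℂ} {L : ℕ → ℂ → (E →L[ℂ] ℂ)}
  {F : ℕ → ℂ → X}

theorem differentiableOn_limit (h : CrossData D A G B r ev Φ M)
    (ha : Approx D A G B r ev Φ M g L F) :
    DifferentiableOn ℂ (fun p : ℂ × ℂ => g p.1 p.2)
      {p ∈ D ×ˢ G | omegaC A D p.1 + omegaC B G p.2 < 1} := by
  rintro ⟨z₀, w₀⟩ ⟨⟨hz₀, hw₀⟩, hlt⟩
  simp only at hz₀ hw₀ hlt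
  set δ := (1 - (omegaC A D z₀ + omegaC B G w₀)) / 3 with hδ
  have hδ0 : 0 < δ := by rw [hδ]; linarith
  obtain ⟨C, hC⟩ := ha.norm_sub_le (-δ) (by linarith)
  have hρ : Real.exp (-δ) < 1 := Real.exp_lt_one_iff.2 (by linarith)
  have hU := h.left.isOpen_omegaC_lt (omegaC A D z₀ + δ)
  have hV := h.right.isOpen_omegaC_lt (omegaC B G w₀ + δ)
  have hC' : ∀ z ∈ {z ∈ D | omegaC A D z < omegaC A D z₀ + δ},
      ∀ w ∈ {w ∈ G | omegaC B G w < omegaC B G w₀ + δ}, ∀ n : ℕ,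
      ‖L n z (Φ w) - g z w‖ ≤ C * Real.exp (-δ) ^ n ∧
      ‖ev z (F n w) - g z w‖ ≤ C * Real.exp (-δ) ^ n := fun z hz w hw =>
    hC z hz.1 w hw.1 (by linarith [hz.2, hw.2])
  refine (differentiableAt_of_separately hU hV (C := M + C) (fun w hw => ?_) (fun z hz => ?_)
    (fun z hz w hw => ?_) (p := (z₀, w₀)) ⟨⟨hz₀, by simpa⟩, hw₀, by simpa⟩).differentiableWithinAt
  · exact differentiableOn_of_norm_sub_le_pow hU
      (fun n => (h.differentiableOn_eval (F n w)).mono fun z hz => hz.1) (Real.exp_pos _).le hρ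
      fun n z hz => (hC' z hz w hw n).2
  · exact differentiableOn_of_norm_sub_le_pow hV
      (fun n => (L n z).differentiable.comp_differentiableOn
        (h.differentiableOn.mono fun w hw => hw.1)) (Real.exp_pos _).le hρ
      fun n w hw => (hC' z hz w hw n).1
  · have h1 := (hC' z hz w hw 0).1
    have h2 := ha.norm_L 0 z hz.1 (Φ w)
    simp only [CharP.cast_eq_zero, zero_mul, Real.exp_zero, one_mul, pow_zero, mul_one] at h1 h2
    linarith [norm_sub_norm_le (g z w) (L 0 z (Φ w)), h.norm_le w hw.1,
      norm_sub_rev (L 0 z (Φ w)) (g z w)]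

theorem tendsto_limit_left (h : CrossData D A G B r ev Φ M)
    (ha : Approx D A G B r ev Φ M g L F) {a₀ w₀ : ℂ} (ha₀ : a₀ ∈ A) (hw₀ : w₀ ∈ G)
    (hlt : omegaC B G w₀ < 1) {d : E →L[ℂ] ℂ} (hd : ∀ e, ‖d e‖ ≤ ‖e‖)
    (hlim : ∀ x, Tendsto (fun z => ev z x) (𝓝[D] a₀) (𝓝 (d (r x)))) :
    Tendsto (fun p : ℂ × ℂ => g p.1 p.2) (𝓝[D ×ˢ G] (a₀, w₀)) (𝓝 (d (Φ w₀))) := by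
  set δ := (1 - omegaC B G w₀) / 3 with hδ
  have hδ0 : 0 < δ := by rw [hδ]; linarith
  obtain ⟨C, hC⟩ := ha.norm_sub_le (-δ) (by linarith)
  have hρ : Real.exp (-δ) < 1 := Real.exp_lt_one_iff.2 (by linarith)
  rw [nhdsWithin_prod_eq]
  have hK : Tendsto (fun n : ℕ => 3 * (C * Real.exp (-δ) ^ n) +
      2 * M * Real.exp (-(n * (1 - omegaC B G w₀)))) atTop (𝓝 0) := by
    simpa using (((tendsto_pow_atTop_nhds_zero_of_lt_one (Real.exp_pos _).le hρ).const_mul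
      C).const_mul 3).add ((tendsto_exp_neg_nat_mul (sub_pos.2 hlt)).const_mul (2 * M))
  have hΦ : Tendsto (fun w => ‖Φ w - Φ w₀‖) (𝓝[G] w₀) (𝓝 0) :=
    tendsto_iff_norm_sub_tendsto_zero.1 (h.differentiableOn.continuousOn w₀ hw₀)
  refine tendsto_of_norm_sub_le_add hK (R := fun n p => Real.exp (n * δ) * ‖Φ p.2 - Φ w₀‖ +
    ‖ev p.1 (F n w₀) - d (r (F n w₀))‖) (fun n => ?_) ?_
  · simpa using ((hΦ.comp tendsto_snd).const_mul (Real.exp (n * δ))).add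
      ((tendsto_iff_norm_sub_tendsto_zero.1 (hlim (F n w₀))).comp tendsto_fst)
  have hz : ∀ᶠ z in 𝓝[D] a₀, z ∈ D ∧ omegaC A D z ≤ δ :=
    (eventually_mem_nhdsWithin).and (h.left.vanishesAt_omegaC a₀ ha₀ δ hδ0)
  have hw : ∀ᶠ w in 𝓝[G] w₀, w ∈ G ∧ omegaC B G w < omegaC B G w₀ + δ :=
    mem_nhdsWithin_of_mem_nhds
      ((h.right.isOpen_omegaC_lt (omegaC B G w₀ + δ)).mem_nhds ⟨hw₀, by linarith⟩)
  filter_upwards [hz.prod_mk hw] with ⟨z, w⟩ ⟨⟨hzD, hz⟩, hwG, hw⟩ n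
  simp only at hz hw hzD hwG ⊢
  have h1 := (hC z hzD w hwG (by linarith) n).1
  have h2 := hC z hzD w₀ hw₀ (by linarith) n
  have h3 : ‖L n z (Φ w - Φ w₀)‖ ≤ Real.exp (n * δ) * ‖Φ w - Φ w₀‖ :=
    (ha.norm_L n z hzD _).trans (by gcongr)
  have h4 : ‖d (Φ w₀ - r (F n w₀))‖ ≤ _ := (hd _).trans (ha.norm_F_sub n w₀ hw₀)
  have : g z w - d (Φ w₀) = -(L n z (Φ w) - g z w) + L n z (Φ w - Φ w₀) +
      (L n z (Φ w₀) - g z w₀) + -(ev z (F n w₀) - g z w₀) +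
      (ev z (F n w₀) - d (r (F n w₀))) + -(d (Φ w₀ - r (F n w₀))) := by
    simp only [map_sub]
    ring
  rw [this]
  refine (norm_add_le_of_le (norm_add_le_of_le (norm_add_le_of_le (norm_add_le_of_le
    (norm_add_le_of_le (norm_neg _ |>.trans_le h1) h3) h2.1) (norm_neg _ |>.trans_le h2.2)) le_rfl)
    (norm_neg _ |>.trans_le h4)).trans (by linarith)

theorem tendsto_limit_right (h : CrossData D A G B r ev Φ M)
    (ha : Approx D A G B r ev Φ M g L F) {z₀ b₀ : ℂ} (hb₀ : b₀ ∈ B) {α : ℝ} (hα : α < 1)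
    (hz₀ : ∀ ε > 0, ∀ᶠ z in 𝓝[D] z₀, omegaC A D z ≤ α + ε) {x : X}
    (hx : Tendsto Φ (𝓝[G] b₀) (𝓝 (r x))) {c : ℂ}
    (hlim : Tendsto (fun z => ev z x) (𝓝[D] z₀) (𝓝 c)) :
    Tendsto (fun p : ℂ × ℂ => g p.1 p.2) (𝓝[D ×ˢ G] (z₀, b₀)) (𝓝 c) := by
  set δ := (1 - α) / 3 with hδ
  have hδ0 : 0 < δ := by rw [hδ]; linarith
  obtain ⟨C, hC⟩ := ha.norm_sub_le (-δ) (by linarith)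
  have hρ : Real.exp (-δ) < 1 := Real.exp_lt_one_iff.2 (by linarith)
  rw [nhdsWithin_prod_eq]
  have hK : Tendsto (fun n : ℕ => C * Real.exp (-δ) ^ n +
      Real.exp (-(n * (1 - (α + δ)))) * ‖x‖) atTop (𝓝 0) := by
    simpa using ((tendsto_pow_atTop_nhds_zero_of_lt_one (Real.exp_pos _).le hρ).const_mul
      C).add ((tendsto_exp_neg_nat_mul (c := 1 - (α + δ)) (by linarith)).mul_const ‖x‖)
  refine tendsto_of_norm_sub_le_add hK (R := fun n p => Real.exp (n * (α + δ)) * ‖Φ p.2 - r x‖ +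
    ‖ev p.1 x - c‖) (fun n => ?_) ?_
  · simpa using (((tendsto_iff_norm_sub_tendsto_zero.1 hx).comp tendsto_snd).const_mul
      (Real.exp (n * (α + δ)))).add ((tendsto_iff_norm_sub_tendsto_zero.1 hlim).comp tendsto_fst)
  have hz : ∀ᶠ z in 𝓝[D] z₀, z ∈ D ∧ omegaC A D z ≤ α + δ :=
    (eventually_mem_nhdsWithin).and (hz₀ δ hδ0)
  have hw : ∀ᶠ w in 𝓝[G] b₀, w ∈ G ∧ omegaC B G w ≤ δ :=
    (eventually_mem_nhdsWithin).and (h.right.vanishesAt_omegaC b₀ hb₀ δ hδ0)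
  filter_upwards [hz.prod_mk hw] with ⟨z, w⟩ ⟨⟨hzD, hz⟩, hwG, hw⟩ n
  simp only at hz hw hzD hwG ⊢
  have h1 := (hC z hzD w hwG (by linarith) n).1
  have h3 : ‖L n z (Φ w - r x)‖ ≤ Real.exp (n * (α + δ)) * ‖Φ w - r x‖ :=
    (ha.norm_L n z hzD _).trans (by gcongr)
  have h4 : ‖L n z (r x) - ev z x‖ ≤ Real.exp (-(n * (1 - (α + δ)))) * ‖x‖ :=
    (ha.norm_L_sub n z hzD _).trans (by gcongr)
  have : g z w - c = -(L n z (Φ w) - g z w) + L n z (Φ w - r x) +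
      (L n z (r x) - ev z x) + (ev z x - c) := by
    simp only [map_sub]
    ring
  rw [this]
  refine (norm_add_le_of_le (norm_add_le_of_le
    (norm_add_le_of_le (norm_neg _ |>.trans_le h1) h3) h4) le_rfl).trans (by linarith)

end CrossData

theorem ContinuousLinearMap.circleIntegral_comp_comm {E : Type*} [NormedAddCommGroup E]
    [NormedSpace ℂ E] [CompleteSpace E] (l : E →L[ℂ] ℂ) {f : ℂ → E} {c : ℂ} {R : ℝ}
    (hf : CircleIntegrable f c R) : l (∮ z in C(c, R), f z) = ∮ z in C(c, R), l (f z) := by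
  have := (l.restrictScalars ℝ).intervalIntegral_comp_comm hf.out
  simp only [circleIntegral]
  rw [← ContinuousLinearMap.coe_restrictScalars' (R := ℝ), ← this]
  refine intervalIntegral.integral_congr fun θ _ => ?_
  simp

/-- A continuous map on an open subset of `ℂ` which is holomorphic after composition with a
separating family of continuous functionals is holomorphic. -/
theorem differentiableOn_of_separating {E ι : Type*} [NormedAddCommGroup E] [NormedSpace ℂ E]
    [CompleteSpace E] {U : Set ℂ} (hU : IsOpen U) {Φ : ℂ → E} (hΦ : ContinuousOn Φ U)
    (l : ι → (E →L[ℂ] ℂ)) (hl : ∀ x y, (∀ i, l i x = l i y) → x = y)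
    (h : ∀ i, DifferentiableOn ℂ (fun w => l i (Φ w)) U) : DifferentiableOn ℂ Φ U := by
  intro c hc
  obtain ⟨R, hR, hRU⟩ := nhds_basis_closedBall.mem_iff.1 (hU.mem_nhds hc)
  lift R to NNReal using hR.le
  have hcont : ContinuousOn Φ (sphere c R) := hΦ.mono (sphere_subset_closedBall.trans hRU)
  have hint : CircleIntegrable Φ c R := hcont.circleIntegrable R.2
  have hps := hasFPowerSeriesOn_cauchy_integral hint (by exact_mod_cast hR)
  have heq : ∀ w ∈ ball c R,
      ((2 * π * I : ℂ)⁻¹ • ∮ z in C(c, R), (z - w)⁻¹ • Φ z) = Φ w := by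
    intro w hw
    refine hl _ _ fun i => ?_
    have hint' : CircleIntegrable (fun z => (z - w)⁻¹ • Φ z) c R := by
      refine ContinuousOn.circleIntegrable R.2 (ContinuousOn.smul ?_ hcont)
      refine (continuousOn_id.sub continuousOn_const).inv₀ fun z hz hzw => ?_
      have hzw' : z = w := sub_eq_zero.1 hzw
      exact (mem_ball.1 hw).ne (hzw' ▸ hz)
    rw [map_smul, (l i).circleIntegral_comp_comm hint']
    simp only [map_smul]
    exact two_pi_I_inv_smul_circleIntegral_sub_inv_smul_of_differentiable_on_off_countable
      countable_empty hw ((h i).continuousOn.mono hRU)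
      (fun x hx => (h i).differentiableAt (hU.mem_nhds (hRU (ball_subset_closedBall hx.1))))
  have hd : DifferentiableAt ℂ
      (fun w => (2 * π * I : ℂ)⁻¹ • ∮ z in C(c, R), (z - w)⁻¹ • Φ z) c :=
    hps.analyticAt.differentiableAt
  refine (hd.congr_of_eventuallyEq ?_).differentiableWithinAt
  filter_upwards [ball_mem_nhds c hR] with w hw using (heq w hw).symm

section Eval

variable {K K' : Set ℂ}

open Classical in
/-- Evaluation of continuous functions on `K` at a point of `ℂ`, zero outside `K`. -/
def evalAt (K : Set ℂ) (z : ℂ) : C(K, ℂ) →L[ℂ] ℂ :=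
  if h : z ∈ K then ContinuousMap.evalCLM ℂ ⟨z, h⟩ else 0

theorem evalAt_of_mem {z : ℂ} (hz : z ∈ K) (F : C(K, ℂ)) : evalAt K z F = F ⟨z, hz⟩ := by
  simp [evalAt, hz]

theorem norm_evalAt_le [CompactSpace K] (z : ℂ) (F : C(K, ℂ)) : ‖evalAt K z F‖ ≤ ‖F‖ := by
  by_cases hz : z ∈ K
  · rw [evalAt_of_mem hz]
    exact F.norm_coe_le_norm _
  · simp [evalAt, hz]

theorem continuousOn_evalAt (F : C(K, ℂ)) : ContinuousOn (fun z => evalAt K z F) K := by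
  rw [continuousOn_iff_continuous_domRestrict]
  convert F.continuous using 1
  ext z
  exact evalAt_of_mem z.2 F

/-- The continuous functions on `K` which are holomorphic on `D`. -/
def holoSubmodule (K D : Set ℂ) : Submodule ℂ C(K, ℂ) where
  carrier := {F | DifferentiableOn ℂ (fun z => evalAt K z F) D}
  add_mem' {F₁ F₂} h₁ h₂ := by
    simp only [Set.mem_ofPred_eq, map_add] at *
    exact h₁.add h₂
  zero_mem' := by
    simp only [Set.mem_ofPred_eq, map_zero]
    exact differentiableOn_const 0
  smul_mem' c F h := by
    simp only [Set.mem_ofPred_eq, map_smul] at *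
    exact h.const_smul c

/-- Restriction of continuous functions to a smaller compact set. -/
def restrictCLM [CompactSpace K] [CompactSpace K'] (h : K' ⊆ K) : C(K, ℂ) →L[ℂ] C(K', ℂ) :=
  LinearMap.mkContinuous
    { toFun := fun F => F.comp ⟨Set.inclusion h, continuous_inclusion h⟩
      map_add' := fun _ _ => rfl
      map_smul' := fun _ _ => rfl } 1 fun F => by
    rw [one_mul]
    exact (ContinuousMap.norm_le _ (norm_nonneg _)).2 fun _ => F.norm_coe_le_norm _

theorem evalAt_restrictCLM [CompactSpace K] [CompactSpace K'] (h : K' ⊆ K) {z : ℂ} (hz : z ∈ K')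
    (F : C(K, ℂ)) : evalAt K' z (restrictCLM h F) = evalAt K z F := by
  rw [evalAt_of_mem hz, evalAt_of_mem (h hz)]
  rfl

end Eval

theorem norm_restrictCLM_le {K K' : Set ℂ} [CompactSpace K] [CompactSpace K'] (h : K' ⊆ K)
    (F : C(K, ℂ)) : ‖restrictCLM h F‖ ≤ ‖F‖ :=
  (ContinuousMap.norm_le _ (norm_nonneg _)).2 fun _ => F.norm_coe_le_norm _

theorem exists_extension_of_compact {D A G B KD KA KG KB : Set ℂ} (hDA : GoodPair D A)
    (hGB : GoodPair G B) (hKD : IsCompact KD) (hKA : IsCompact KA) (hKG : IsCompact KG)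
    (hKB : IsCompact KB) (hKAD : KA ⊆ KD) (hKBG : KB ⊆ KG) (hD : D ⊆ KD) (hA : A ⊆ KA)
    (hG : G ⊆ KG) (hB : B ⊆ KB) {f : ℂ × ℂ → ℂ} (hf : ContinuousOn f (KD ×ˢ KB ∪ KA ×ˢ KG))
    (hf₁ : ∀ a ∈ KA, DifferentiableOn ℂ (fun w => f (a, w)) G)
    (hf₂ : ∀ b ∈ B, DifferentiableOn ℂ (fun z => f (z, b)) D) :
    ∃ g : ℂ × ℂ → ℂ, DifferentiableOn ℂ g {p ∈ D ×ˢ G | omegaC A D p.1 + omegaC B G p.2 < 1} ∧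
      (∀ a ∈ A, ∀ w ∈ G, omegaC B G w < 1 → Tendsto g (𝓝[D ×ˢ G] (a, w)) (𝓝 (f (a, w)))) ∧
      (∀ z ∈ D, ∀ b ∈ B, omegaC A D z < 1 → Tendsto g (𝓝[D ×ˢ G] (z, b)) (𝓝 (f (z, b)))) ∧
      (∀ a ∈ A, ∀ b ∈ B, Tendsto g (𝓝[D ×ˢ G] (a, b)) (𝓝 (f (a, b)))) := by
  have := isCompact_iff_compactSpace.1 hKD
  have := isCompact_iff_compactSpace.1 hKA
  obtain ⟨M, hM0, hM⟩ : ∃ M > 0, ∀ p ∈ KD ×ˢ KB ∪ KA ×ˢ KG, ‖f p‖ ≤ M := by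
    obtain ⟨M, hM⟩ := ((hKD.prod hKB).union (hKA.prod hKG)).exists_bound_of_continuousOn hf
    exact ⟨max M 1, by positivity, fun p hp => (hM p hp).trans (le_max_left _ _)⟩
  -- boundary values and the extension of the horizontal slices
  obtain ⟨Φ, hΦc, hΦe⟩ : ∃ Φ : ℂ → C(KA, ℂ), ContinuousOn Φ KG ∧
      ∀ w ∈ KG, ∀ a ∈ KA, evalAt KA a (Φ w) = f (a, w) := by
    have hcont : Continuous (fun p : KG × KA => f (p.2, p.1)) := by
      refine hf.comp_continuous (f := fun p : KG × KA => ((p.2 : ℂ), (p.1 : ℂ))) (by fun_prop)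
        fun p => Or.inr ⟨p.2.2, p.1.2⟩
    classical
    refine ⟨fun w => if h : w ∈ KG then (ContinuousMap.curry ⟨_, hcont⟩) ⟨w, h⟩ else 0, ?_, ?_⟩
    · rw [continuousOn_iff_continuous_domRestrict]
      convert (ContinuousMap.curry ⟨_, hcont⟩).continuous using 1
      ext w : 1
      simp
    · intro w hw a ha
      simp only [dif_pos hw]
      rw [evalAt_of_mem ha]
      rfl
  have hΦM : ∀ w ∈ KG, ‖Φ w‖ ≤ M := fun w hw => by
    refine (ContinuousMap.norm_le _ hM0.le).2 fun a => ?_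
    rw [← evalAt_of_mem a.2, hΦe w hw a a.2]
    exact hM _ (Or.inr ⟨a.2, hw⟩)
  have hsep : ∀ x y : C(KA, ℂ), (∀ a : KA, evalAt KA a x = evalAt KA a y) → x = y := by
    intro x y hxy
    ext a
    simpa [evalAt_of_mem a.2] using hxy a
  let r : holoSubmodule KD D →L[ℂ] C(KA, ℂ) := (restrictCLM hKAD).comp (holoSubmodule KD D).subtypeL
  let ev : ℂ → holoSubmodule KD D →ₗ[ℂ] ℂ :=
    fun z => (evalAt KD z : C(KD, ℂ) →ₗ[ℂ] ℂ) ∘ₗ (holoSubmodule KD D).subtype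
  have hev : ∀ z F, ev z F = evalAt KD z F.1 := fun _ _ => rfl
  have hevlim : ∀ F, ∀ z ∈ KD, Tendsto (fun z => ev z F) (𝓝[D] z) (𝓝 (ev z F)) := fun F z hz =>
    ((continuousOn_evalAt F.1) z hz).mono_left (nhdsWithin_mono _ hD)
  have hslice : ∀ b ∈ B, ∃ F : holoSubmodule KD D, (∀ z ∈ KD, ev z F = f (z, b)) ∧ ‖F‖ ≤ M ∧
      r F = Φ b := by
    intro b hb
    have hcont : Continuous (fun z : KD => f (z, b)) :=
      hf.comp_continuous (f := fun z : KD => ((z : ℂ), b)) (by fun_prop)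
        fun z => Or.inl ⟨z.2, hB hb⟩
    have hev' : ∀ z ∈ KD, evalAt KD z ⟨_, hcont⟩ = f (z, b) := fun z hz => by
      rw [evalAt_of_mem hz]
      rfl
    refine ⟨⟨⟨_, hcont⟩, ?_⟩, hev', ?_, ?_⟩
    · exact (hf₂ b hb).congr fun z hz => hev' z (hD hz)
    · exact (ContinuousMap.norm_le _ hM0.le).2 fun z => hM _ (Or.inl ⟨z.2, hB hb⟩)
    · refine hsep _ _ fun a => ?_
      rw [hΦe b (hKBG (hB hb)) a a.2]
      exact (evalAt_restrictCLM hKAD a.2 _).trans (hev' a (hKAD a.2))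
  have hdata : CrossData D A G B r ev Φ M :=
    { left := hDA
      right := hGB
      norm_restrict := fun F => norm_restrictCLM_le hKAD F.1
      differentiableOn_eval := fun F => F.2
      norm_eval := fun z _ F => norm_evalAt_le z F.1
      eventually_norm_eval := fun F a ha ε hε => by
        have h1 := (hevlim F a (hKAD (hA ha))).norm
        have h2 : ‖ev a F‖ ≤ ‖r F‖ := by
          rw [hev, ← evalAt_restrictCLM hKAD (hA ha)]
          exact norm_evalAt_le _ _
        filter_upwards [h1.eventually (gt_mem_nhds (lt_add_of_pos_right _ hε))] with z hz
        linarith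
      pos := hM0
      differentiableOn := by
        refine differentiableOn_of_separating hGB.isOpen (hΦc.mono hG)
          (fun a : KA => evalAt KA a) hsep fun a => ?_
        exact (hf₁ a a.2).congr fun w hw => hΦe w (hG hw) a a.2
      norm_le := fun w hw => hΦM w (hG hw)
      tendsto := fun b hb => by
        obtain ⟨F, -, hFM, hF⟩ := hslice b hb
        exact ⟨F, hFM, hF ▸ (hΦc b (hKBG (hB hb))).mono_left (nhdsWithin_mono _ hG)⟩ }
  obtain ⟨g, L, F, ha⟩ := hdata.exists_limit
  refine ⟨fun p => g p.1 p.2, hdata.differentiableOn_limit ha, fun a haA w hw hlt => ?_,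
    fun z hz b hb hlt => ?_, fun a haA b hb => ?_⟩
  · rw [← hΦe w (hG hw) a (hA haA)]
    refine hdata.tendsto_limit_left ha haA hw hlt (norm_evalAt_le a) fun x => ?_
    have := hevlim x a (hKAD (hA haA))
    rwa [hev a, ← evalAt_restrictCLM hKAD (hA haA)] at this
  · obtain ⟨x, hx, -, hxr⟩ := hslice b hb
    rw [← hx z (hD hz)]
    refine hdata.tendsto_limit_right ha hb hlt (fun ε hε => ?_)
      (hxr ▸ (hΦc b (hKBG (hB hb))).mono_left (nhdsWithin_mono _ hG)) (hevlim x z (hD hz))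
    filter_upwards [mem_nhdsWithin_of_mem_nhds
      ((hDA.isOpen_omegaC_lt (omegaC A D z + ε)).mem_nhds ⟨hz, by linarith⟩)] with y hy
    exact hy.2.le
  · obtain ⟨x, hx, -, hxr⟩ := hslice b hb
    rw [← hx a (hKAD (hA haA))]
    refine hdata.tendsto_limit_right ha hb zero_lt_one (fun ε hε => ?_)
      (hxr ▸ (hΦc b (hKBG (hB hb))).mono_left (nhdsWithin_mono _ hG))
      (hevlim x a (hKAD (hA haA)))
    simpa using hDA.vanishesAt_omegaC a haA ε hε

theorem IsJordanDomain.goodPair {D A : Set ℂ} (hD : IsJordanDomain D)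
    (hA : ∃ V : Set ℂ, IsOpen V ∧ A = V ∩ frontier D) : GoodPair D A := by
  obtain ⟨hDo, -, hDb, ⟨φ⟩⟩ := hD
  obtain ⟨V, hV, rfl⟩ := hA
  refine ⟨hDo, hDb, inter_subset_right, fun a ha => ?_, fun a ha => ?_⟩
  · obtain ⟨r, hr, hrV⟩ := Metric.isOpen_iff.1 hV a ha.1
    exact ⟨r, hr, fun x hx => ⟨hrV hx.2, hx.1⟩⟩
  · set x : sphere (0 : ℂ) 1 := φ.symm ⟨a, ha.2⟩
    have hxn : ‖(x : ℂ)‖ = 1 := mem_sphere_zero_iff_norm.1 x.2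
    have hmem : ∀ t : ℝ, (x : ℂ) * Complex.exp (t * I) ∈ sphere (0 : ℂ) 1 := fun t => by
      rw [mem_sphere_zero_iff_norm, norm_mul, hxn, Complex.norm_exp_ofReal_mul_I, one_mul]
    have hφx : φ x = ⟨a, ha.2⟩ := φ.apply_symm_apply _
    clear_value x
    have h0 : (⟨_, hmem 0⟩ : sphere (0 : ℂ) 1) = x := Subtype.ext (by simp)
    refine ⟨fun t => φ ⟨_, hmem t⟩, ?_, fun t ht => ?_, ?_, π, Real.pi_pos, fun hπ => ?_⟩
    · refine continuous_subtype_val.comp (φ.continuous.comp (Continuous.subtype_mk ?_ _))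
      fun_prop
    · exact (hDo.inter_frontier_eq.subset ⟨ht, (φ ⟨_, hmem t⟩).2⟩)
    · exact congrArg Subtype.val ((congrArg φ h0).trans hφx)
    · have h1 : φ ⟨_, hmem π⟩ = φ x :=
        (Subtype.ext hπ : _ = (⟨a, ha.2⟩ : frontier D)).trans hφx.symm
      have h2 := congrArg Subtype.val (φ.injective h1)
      simp only [exp_pi_mul_I, mul_neg, mul_one] at h2
      have h3 : (x : ℂ) = 0 := by linear_combination -h2 / 2
      rw [h3, norm_zero] at hxn
      exact zero_ne_one hxn

/-- The domain of separate harmonic measure attached to two pairs. -/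
def crossHull (D A G B : Set ℂ) : Set (ℂ × ℂ) :=
  {p ∈ D ×ˢ G | omegaC A D p.1 + omegaC B G p.2 < 1}

section hull

variable {D A G B : Set ℂ}

theorem GoodPair.eventually_omegaC_lt (h : GoodPair D A) {z : ℂ} (hz : z ∈ D) {c : ℝ}
    (hc : omegaC A D z < c) : ∀ᶠ x in 𝓝[D] z, omegaC A D x < c :=
  h.omegaC_isUnitSubharmonic.usc z hz c hc

theorem GoodPair.eventually_omegaC_lt_of_mem (h : GoodPair D A) {a : ℂ} (ha : a ∈ A) {c : ℝ}
    (hc : 0 < c) : ∀ᶠ x in 𝓝[D] a, omegaC A D x < c := by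
  filter_upwards [h.vanishesAt_omegaC a ha (c / 2) (half_pos hc)] with x hx
  linarith

theorem eventually_mem_crossHull {x y : ℂ} {c d : ℝ} (hcd : c + d ≤ 1)
    (hx : ∀ᶠ z in 𝓝[D] x, omegaC A D z < c) (hy : ∀ᶠ w in 𝓝[G] y, omegaC B G w < d) :
    ∀ᶠ p in 𝓝[D ×ˢ G] (x, y), p ∈ crossHull D A G B := by
  rw [nhdsWithin_prod_eq]
  filter_upwards [(hx.and eventually_mem_nhdsWithin).prod_mk (hy.and eventually_mem_nhdsWithin)]
    with p hp
  exact ⟨⟨hp.1.2, hp.2.2⟩, by linarith [hp.1.1, hp.2.1]⟩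

theorem GoodPair.isOpen_crossHull (hDA : GoodPair D A) (hGB : GoodPair G B) :
    IsOpen (crossHull D A G B) := by
  rw [isOpen_iff_mem_nhds]
  rintro ⟨z, w⟩ ⟨⟨hz, hw⟩, hlt⟩
  simp only at hz hw hlt
  set δ := (1 - (omegaC A D z + omegaC B G w)) / 2 with hδ
  have := eventually_mem_crossHull (c := omegaC A D z + δ) (d := omegaC B G w + δ) (by linarith)
    (hDA.eventually_omegaC_lt hz (by linarith)) (hGB.eventually_omegaC_lt hw (by linarith))
  rwa [(hDA.isOpen.prod hGB.isOpen).nhdsWithin_eq ⟨hz, hw⟩] at this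

theorem GoodPair.crossHull_subset {D' A' G' B' : Set ℂ} (hDA : GoodPair D A) (hGB : GoodPair G B)
    (hDA' : GoodPair D' A') (hGB' : GoodPair G' B') (hD : D ⊆ D') (hA : A ⊆ A') (hG : G ⊆ G')
    (hB : B ⊆ B') : crossHull D A G B ⊆ crossHull D' A' G' B' := fun p hp =>
  ⟨⟨hD hp.1.1, hG hp.1.2⟩, by
    linarith [hp.2, hDA.omegaC_mono hDA' hD hA hp.1.1, hGB.omegaC_mono hGB' hG hB hp.1.2]⟩

theorem GoodPair.eqOn_crossHull (hDA : GoodPair D A) (hGB : GoodPair G B) {g g' φ : ℂ × ℂ → ℂ}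
    (hg : DifferentiableOn ℂ g (crossHull D A G B))
    (hg' : DifferentiableOn ℂ g' (crossHull D A G B))
    (h : ∀ a ∈ A, ∀ w ∈ G, omegaC B G w < 1 →
      Tendsto g (𝓝[crossHull D A G B] (a, w)) (𝓝 (φ (a, w))))
    (h' : ∀ a ∈ A, ∀ w ∈ G, omegaC B G w < 1 →
      Tendsto g' (𝓝[crossHull D A G B] (a, w)) (𝓝 (φ (a, w)))) :
    EqOn g g' (crossHull D A G B) := by
  rintro ⟨z, w⟩ ⟨⟨hz, hw⟩, hlt⟩
  simp only at hz hw hlt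
  have hz0 := omegaC_nonneg hDA.isOpen hDA.subset_closure hz
  have hw0 := omegaC_nonneg hGB.isOpen hGB.subset_closure hw
  have hmaps : MapsTo (fun z => (z, w)) {z ∈ D | omegaC A D z < 1 - omegaC B G w}
      (crossHull D A G B) := fun x hx => ⟨⟨hx.1, hw⟩, by linarith [hx.2]⟩
  have hdiff : Differentiable ℂ (fun z : ℂ => (z, w)) := by fun_prop
  refine sub_eq_zero.1 (hDA.eq_zero_of_vanishes (c := 1 - omegaC B G w) (by linarith) (by linarith)
    (d := fun z => g (z, w) - g' (z, w))
    ((hg.comp hdiff.differentiableOn hmaps).sub (hg'.comp hdiff.differentiableOn hmaps))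
    (fun a ha ε hε => ?_) hz (by linarith))
  have hlim : Tendsto (fun z : ℂ => (z, w)) (𝓝[{z ∈ D | omegaC A D z < 1 - omegaC B G w}] a)
      (𝓝[crossHull D A G B] (a, w)) :=
    hdiff.continuous.continuousWithinAt.tendsto_nhdsWithin hmaps
  have := (((h a ha w hw (by linarith)).comp hlim).sub ((h' a ha w hw (by linarith)).comp hlim)).norm
  rw [sub_self, norm_zero] at this
  filter_upwards [this.eventually (gt_mem_nhds hε)] with x hx using hx.le

end hull

theorem GoodPair.exists_extension_trim {D A G B : Set ℂ} (hDA : GoodPair D A) (hGB : GoodPair G B)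
    {f : ℂ × ℂ → ℂ} (hfc : ContinuousOn f (((D ∪ A) ×ˢ B) ∪ (A ×ˢ (G ∪ B))))
    (hf1 : ∀ a ∈ A, DifferentiableOn ℂ (fun w => f (a, w)) G)
    (hf2 : ∀ b ∈ B, DifferentiableOn ℂ (fun z => f (z, b)) D) (j : ℕ) :
    ∃ g : ℂ × ℂ → ℂ,
      DifferentiableOn ℂ g (crossHull (_root_.trim D A j D) (_root_.trim D A j (frontier D))
        (_root_.trim G B j G) (_root_.trim G B j (frontier G))) ∧
      (∀ a ∈ _root_.trim D A j (frontier D), ∀ w ∈ _root_.trim G B j G,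
        omegaC (_root_.trim G B j (frontier G)) (_root_.trim G B j G) w < 1 →
        Tendsto g (𝓝[_root_.trim D A j D ×ˢ _root_.trim G B j G] (a, w)) (𝓝 (f (a, w)))) ∧
      (∀ z ∈ _root_.trim D A j D, ∀ b ∈ _root_.trim G B j (frontier G),
        omegaC (_root_.trim D A j (frontier D)) (_root_.trim D A j D) z < 1 →
        Tendsto g (𝓝[_root_.trim D A j D ×ˢ _root_.trim G B j G] (z, b)) (𝓝 (f (z, b)))) ∧
      (∀ a ∈ _root_.trim D A j (frontier D), ∀ b ∈ _root_.trim G B j (frontier G),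
        Tendsto g (𝓝[_root_.trim D A j D ×ˢ _root_.trim G B j G] (a, b)) (𝓝 (f (a, b)))) := by
  have hDc : IsCompact (closure D) := hDA.isBounded.isCompact_closure
  have hGc : IsCompact (closure G) := hGB.isBounded.isCompact_closure
  refine exists_extension_of_compact (hDA.trim j) (hGB.trim j)
    (isCompact_trimCore (D := D) (A := A) (j := j) hDc)
    (isCompact_trimCore (D := D) (A := A) (j := j) (hDc.of_isClosed_subset isClosed_frontier
      frontier_subset_closure))
    (isCompact_trimCore (D := G) (A := B) (j := j) hGc)
    (isCompact_trimCore (D := G) (A := B) (j := j) (hGc.of_isClosed_subset isClosed_frontier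
      frontier_subset_closure))
    (inter_subset_inter_left _ frontier_subset_closure)
    (inter_subset_inter_left _ frontier_subset_closure)
    (trim_subset_trimCore _root_.subset_closure) (trim_subset_trimCore le_rfl)
    (trim_subset_trimCore _root_.subset_closure) (trim_subset_trimCore le_rfl)
    (hfc.mono (union_subset_union (prod_mono trimCore_closure_subset trimCore_frontier_subset)
      (prod_mono trimCore_frontier_subset trimCore_closure_subset)))
    (fun a ha => (hf1 a (trimCore_frontier_subset ha)).mono trim_subset)
    (fun b hb => (hf2 b (trim_frontier_subset hb)).mono trim_subset)

theorem GoodPair.exists_extension {D A G B : Set ℂ} (hDA : GoodPair D A) (hGB : GoodPair G B)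
    (hD1 : ∀ z ∈ D, omegaC A D z < 1) (hG1 : ∀ w ∈ G, omegaC B G w < 1)
    {f : ℂ × ℂ → ℂ} (hfc : ContinuousOn f (((D ∪ A) ×ˢ B) ∪ (A ×ˢ (G ∪ B))))
    (hf1 : ∀ a ∈ A, DifferentiableOn ℂ (fun w => f (a, w)) G)
    (hf2 : ∀ b ∈ B, DifferentiableOn ℂ (fun z => f (z, b)) D) :
    ∃ fhat : ℂ × ℂ → ℂ,
      ContinuousOn fhat (crossHull D A G B ∪ (((D ∪ A) ×ˢ B) ∪ (A ×ˢ (G ∪ B)))) ∧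
      DifferentiableOn ℂ fhat (crossHull D A G B) ∧
      EqOn fhat f (((D ∪ A) ×ˢ B) ∪ (A ×ˢ (G ∪ B))) := by
  classical
  set W : Set (ℂ × ℂ) := ((D ∪ A) ×ˢ B) ∪ (A ×ˢ (G ∪ B)) with hW
  have hDA0 : ∀ z ∈ D, z ∉ A := fun z hz hzA =>
    hDA.isOpen.inter_frontier_eq.subset ⟨hz, hDA.subset hzA⟩
  have hGB0 : ∀ z ∈ G, z ∉ B := fun z hz hzA =>
    hGB.isOpen.inter_frontier_eq.subset ⟨hz, hGB.subset hzA⟩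
  have hWdisj : ∀ p ∈ crossHull D A G B, p ∉ W := by
    rintro p hp (hp' | hp')
    · exact hGB0 _ hp.1.2 hp'.2
    · exact hDA0 _ hp.1.1 hp'.1
  choose g hgd hgl hgr hgc using hDA.exists_extension_trim hGB hfc hf1 hf2
  set H : ℕ → Set (ℂ × ℂ) := fun j => crossHull (_root_.trim D A j D)
    (_root_.trim D A j (frontier D)) (_root_.trim G B j G) (_root_.trim G B j (frontier G)) with hH
  have hHmono : ∀ {i j}, i ≤ j → H i ⊆ H j := fun hij =>
    (hDA.trim _).crossHull_subset (hGB.trim _) (hDA.trim _) (hGB.trim _) (trim_mono hij)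
      (trim_mono hij) (trim_mono hij) (trim_mono hij)
  have hHsub : ∀ j, H j ⊆ crossHull D A G B := fun j =>
    (hDA.trim j).crossHull_subset (hGB.trim j) hDA hGB trim_subset trim_frontier_subset
      trim_subset trim_frontier_subset
  have hHopen : ∀ j, IsOpen (H j) := fun j => (hDA.trim j).isOpen_crossHull (hGB.trim j)
  have hHex : ∀ p ∈ crossHull D A G B, ∃ j, p ∈ H j := by
    rintro ⟨z, w⟩ ⟨⟨hz, hw⟩, hlt⟩
    simp only at hz hw hlt
    set δ := (1 - (omegaC A D z + omegaC B G w)) / 2 with hδ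
    obtain ⟨J₁, hJ₁⟩ := hDA.exists_omegaC_trim_lt hz (c := omegaC A D z + δ) (by linarith)
    obtain ⟨J₂, hJ₂⟩ := hGB.exists_omegaC_trim_lt hw (c := omegaC B G w + δ) (by linarith)
    obtain ⟨h1, h1'⟩ := hJ₁ (max J₁ J₂) (le_max_left _ _)
    obtain ⟨h2, h2'⟩ := hJ₂ (max J₁ J₂) (le_max_right _ _)
    exact ⟨max J₁ J₂, ⟨h1, h2⟩, by simp only; linarith⟩
  have hcons : ∀ {i j}, i ≤ j → EqOn (g i) (g j) (H i) := by
    intro i j hij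
    refine (hDA.trim i).eqOn_crossHull (hGB.trim i) (hgd i) ((hgd j).mono (hHmono hij)) (φ := f)
      (fun a ha w hw hlt => ?_) (fun a ha w hw hlt => ?_)
    · exact (hgl i a ha w hw hlt).mono_left (nhdsWithin_mono _ fun p hp => hp.1)
    · refine (hgl j a (trim_mono hij ha) w (trim_mono hij hw) (lt_of_le_of_lt ?_ hlt)).mono_left
        (nhdsWithin_mono _ fun p hp => (hHmono hij hp).1)
      exact (hGB.trim i).omegaC_mono (hGB.trim j) (trim_mono hij) (trim_mono hij) hw
  have hcons' : ∀ i j, ∀ p, p ∈ H i → p ∈ H j → g i p = g j p := by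
    intro i j p hi hj
    rcases le_total i j with hij | hij
    · exact hcons hij hi
    · exact (hcons hij hj).symm
  set fhat : ℂ × ℂ → ℂ := fun p =>
    if h : ∃ j, p ∈ H j then g h.choose p else f p with hfhat
  have hfH : ∀ j, EqOn fhat (g j) (H j) := by
    intro j p hp
    have h : ∃ j, p ∈ H j := ⟨j, hp⟩
    simp only [hfhat, dif_pos h]
    exact hcons' _ _ p h.choose_spec hp
  have hfW : EqOn fhat f W := by
    intro p hp
    have h : ¬ ∃ j, p ∈ H j := fun ⟨j, hj⟩ => hWdisj p (hHsub j hj) hp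
    simp only [hfhat, dif_neg h]
  have hdiff : ∀ p ∈ crossHull D A G B, DifferentiableAt ℂ fhat p := by
    intro p hp
    obtain ⟨j, hj⟩ := hHex p hp
    have hn := (hHopen j).mem_nhds hj
    exact ((hgd j).differentiableAt hn).congr_of_eventuallyEq ((hfH j).eventuallyEq_of_mem hn)
  have hglue : ∀ (j : ℕ) (x y : ℂ) (Y Y' : Set ℂ), x ∈ _root_.trim D A j Y →
      y ∈ _root_.trim G B j Y' →
      (∀ᶠ p in 𝓝[_root_.trim D A j D ×ˢ _root_.trim G B j G] (x, y), p ∈ H j) →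
      Tendsto (g j) (𝓝[_root_.trim D A j D ×ˢ _root_.trim G B j G] (x, y)) (𝓝 (f (x, y))) →
      Tendsto fhat (𝓝[crossHull D A G B] (x, y)) (𝓝 (f (x, y))) := by
    intro j x y Y Y' hx hy hev hlim
    have hle : 𝓝[crossHull D A G B] (x, y) ≤
        𝓝[_root_.trim D A j D ×ˢ _root_.trim G B j G] (x, y) := by
      rw [nhdsWithin_prod_eq, nhdsWithin_trim hx, nhdsWithin_trim hy, ← nhdsWithin_prod_eq]
      exact nhdsWithin_mono _ fun p hp => hp.1
    refine (hlim.mono_left hle).congr' ?_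
    filter_upwards [hev.filter_mono hle] with p hp using (hfH j hp).symm
  have hbd : ∀ p ∈ W, Tendsto fhat (𝓝[crossHull D A G B] p) (𝓝 (f p)) := by
    have hA : ∀ a ∈ A, ∃ J : ℕ, ∀ j ≥ J, a ∈ _root_.trim D A j (frontier D) := fun a ha =>
      (hDA.exists_mem_trim (Or.inr ha)).imp fun J hJ j hj => ⟨hDA.subset ha, hJ j hj⟩
    have hB : ∀ b ∈ B, ∃ J : ℕ, ∀ j ≥ J, b ∈ _root_.trim G B j (frontier G) := fun b hb =>
      (hGB.exists_mem_trim (Or.inr hb)).imp fun J hJ j hj => ⟨hGB.subset hb, hJ j hj⟩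
    have hleft : ∀ a ∈ A, ∀ w ∈ G,
        Tendsto fhat (𝓝[crossHull D A G B] (a, w)) (𝓝 (f (a, w))) := by
      intro a ha w hw
      obtain ⟨J₁, hJ₁⟩ := hA a ha
      obtain ⟨J₂, hJ₂⟩ := hGB.exists_omegaC_trim_lt hw (hG1 w hw)
      have h1 := hJ₁ (max J₁ J₂) (le_max_left _ _)
      obtain ⟨h2, h3⟩ := hJ₂ (max J₁ J₂) (le_max_right _ _)
      obtain ⟨c, hc, hc1⟩ := exists_between h3
      exact hglue _ a w _ _ h1 h2 (eventually_mem_crossHull (c := 1 - c) (d := c) (by linarith)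
        ((hDA.trim _).eventually_omegaC_lt_of_mem h1 (by linarith))
        ((hGB.trim _).eventually_omegaC_lt h2 hc)) (hgl _ a h1 w h2 h3)
    have hright : ∀ z ∈ D, ∀ b ∈ B,
        Tendsto fhat (𝓝[crossHull D A G B] (z, b)) (𝓝 (f (z, b))) := by
      intro z hz b hb
      obtain ⟨J₁, hJ₁⟩ := hB b hb
      obtain ⟨J₂, hJ₂⟩ := hDA.exists_omegaC_trim_lt hz (hD1 z hz)
      have h1 := hJ₁ (max J₁ J₂) (le_max_left _ _)
      obtain ⟨h2, h3⟩ := hJ₂ (max J₁ J₂) (le_max_right _ _)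
      obtain ⟨c, hc, hc1⟩ := exists_between h3
      exact hglue _ z b _ _ h2 h1 (eventually_mem_crossHull (c := c) (d := 1 - c) (by linarith)
        ((hDA.trim _).eventually_omegaC_lt h2 hc)
        ((hGB.trim _).eventually_omegaC_lt_of_mem h1 (by linarith))) (hgr _ z h2 b h1 h3)
    have hcorner : ∀ a ∈ A, ∀ b ∈ B,
        Tendsto fhat (𝓝[crossHull D A G B] (a, b)) (𝓝 (f (a, b))) := by
      intro a ha b hb
      obtain ⟨J₁, hJ₁⟩ := hA a ha
      obtain ⟨J₂, hJ₂⟩ := hB b hb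
      have h1 := hJ₁ (max J₁ J₂) (le_max_left _ _)
      have h2 := hJ₂ (max J₁ J₂) (le_max_right _ _)
      exact hglue _ a b _ _ h1 h2 (eventually_mem_crossHull (c := 1 / 2) (d := 1 / 2) (by norm_num)
        ((hDA.trim _).eventually_omegaC_lt_of_mem h1 (by norm_num))
        ((hGB.trim _).eventually_omegaC_lt_of_mem h2 (by norm_num))) (hgc _ a h1 b h2)
    rintro ⟨x, y⟩ (⟨hx | hx, hy⟩ | ⟨hx, hy | hy⟩)
    exacts [hright x hx y hy, hcorner x hx y hy, hleft x hx y hy, hcorner x hx y hy]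
  refine ⟨fhat, ?_, fun p hp => (hdiff p hp).differentiableWithinAt, hfW⟩
  rintro p (hp | hp)
  · exact (hdiff p hp).continuousAt.continuousWithinAt
  · refine ContinuousWithinAt.union ?_ ((hfc p hp).congr hfW (hfW hp))
    rw [ContinuousWithinAt, hfW hp]
    exact hbd p hp

/-- Gonchar's boundary cross theorem. -/
theorem gonchar_boundary_cross
    (D G : Set ℂ) (hD : IsJordanDomain D) (hG : IsJordanDomain G)
    (A B : Set ℂ) (hAne : A.Nonempty) (hBne : B.Nonempty)
    (hA : ∃ V : Set ℂ, IsOpen V ∧ A = V ∩ frontier D)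
    (hB : ∃ V : Set ℂ, IsOpen V ∧ B = V ∩ frontier G)
    (f : ℂ × ℂ → ℂ)
    (hfc : ContinuousOn f (((D ∪ A) ×ˢ B) ∪ (A ×ˢ (G ∪ B))))
    (hf1 : ∀ a ∈ A, DifferentiableOn ℂ (fun w => f (a, w)) G)
    (hf2 : ∀ b ∈ B, DifferentiableOn ℂ (fun z => f (z, b)) D) :
    ∃ fhat : ℂ × ℂ → ℂ,
      (ContinuousOn fhat
          ({p ∈ D ×ˢ G | omegaC A D p.1 + omegaC B G p.2 < 1} ∪
            (((D ∪ A) ×ˢ B) ∪ (A ×ˢ (G ∪ B)))) ∧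
        DifferentiableOn ℂ fhat {p ∈ D ×ˢ G | omegaC A D p.1 + omegaC B G p.2 < 1} ∧
        Set.EqOn fhat f (((D ∪ A) ×ˢ B) ∪ (A ×ˢ (G ∪ B)))) ∧
      ∀ g : ℂ × ℂ → ℂ,
        (ContinuousOn g
            ({p ∈ D ×ˢ G | omegaC A D p.1 + omegaC B G p.2 < 1} ∪
              (((D ∪ A) ×ˢ B) ∪ (A ×ˢ (G ∪ B)))) ∧
          DifferentiableOn ℂ g {p ∈ D ×ˢ G | omegaC A D p.1 + omegaC B G p.2 < 1} ∧
          Set.EqOn g f (((D ∪ A) ×ˢ B) ∪ (A ×ˢ (G ∪ B)))) →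
        Set.EqOn g fhat
          ({p ∈ D ×ˢ G | omegaC A D p.1 + omegaC B G p.2 < 1} ∪
            (((D ∪ A) ×ˢ B) ∪ (A ×ˢ (G ∪ B)))) := by
  have hDA := hD.goodPair hA
  have hGB := hG.goodPair hB
  obtain ⟨fhat, hc, hd, he⟩ := hDA.exists_extension hGB
    (fun _ => hDA.omegaC_lt_one hD.2.1.isPreconnected hAne)
    (fun _ => hGB.omegaC_lt_one hG.2.1.isPreconnected hBne) hfc hf1 hf2
  refine ⟨fhat, ⟨hc, hd, he⟩, fun g ⟨hgc, hgd, hge⟩ => ?_⟩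
  have hlim : ∀ u : ℂ × ℂ → ℂ,
      ContinuousOn u (crossHull D A G B ∪ (((D ∪ A) ×ˢ B) ∪ (A ×ˢ (G ∪ B)))) →
      EqOn u f (((D ∪ A) ×ˢ B) ∪ (A ×ˢ (G ∪ B))) → ∀ a ∈ A, ∀ w ∈ G, omegaC B G w < 1 →
      Tendsto u (𝓝[crossHull D A G B] (a, w)) (𝓝 (f (a, w))) := by
    intro u hu hue a ha w hw _
    have hmem : (a, w) ∈ ((D ∪ A) ×ˢ B) ∪ (A ×ˢ (G ∪ B)) := Or.inr ⟨ha, Or.inl hw⟩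
    rw [← hue hmem]
    exact (hu _ (Or.inr hmem)).mono_left (nhdsWithin_mono _ subset_union_left)
  exact (hDA.eqOn_crossHull hGB hgd hd (hlim g hgc hge) (hlim fhat hc he)).union
    (hge.trans he.symm)

end
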